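/- Let Ω ⊂ ℝⁿ_{≥0} be a monotone domain. Then any two normalized symplectic capacities c₁, c₂ on subsets of ℝ^{2n} satisfy c₁(X_{int(Ω)}) = c₂(X_{int(Ω)}) (equivalently, all ball-normalized capacities coincide on the product domain 𝕋ⁿ × Ω). Likewise, any two cube-normalized symplectic capacities (satisfying monotonicity and conformality as before, but normalized by c(P^{2n}(r)) = πr² = c(N^{2n}(r)) for all r > 0, where P^{2n}(r) = μ⁻¹({x ∈ ℝⁿ_{≥0} : xᵢ ≤ πr² for all i}) and N^{2n}(r) = μ⁻¹({x ∈ ℝⁿ_{≥0} : xᵢ ≤ πr² for some i})) satisfy c₁(X_{int(Ω)}) = c₂(X_{int(Ω)}). -/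

import Mathlib

open Set
open scoped Pointwise ENNReal

noncomputable section

/-- The standard symplectic form `ω₀` on `ℝ^{2n} ≅ ℂⁿ`. -/
def stdSymplecticForm (n : ℕ) (u v : Fin n → ℂ) : ℝ :=
  ∑ j, ((starRingEnd ℂ) (u j) * v j).im

/-- `U` symplectically embeds into `V` inside `ℝ^{2n} ≅ ℂⁿ`. -/
def SymplecticEmbeds (n : ℕ) (U V : Set (Fin n → ℂ)) : Prop :=
  ∃ f : (Fin n → ℂ) → (Fin n → ℂ),
    ContDiffOn ℝ (⊤ : ℕ∞) f U ∧ Set.InjOn f U ∧ Set.MapsTo f U V ∧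
    ∀ x ∈ U, ∀ u v : Fin n → ℂ,
      stdSymplecticForm n (fderivWithin ℝ f U x u) (fderivWithin ℝ f U x v) =
        stdSymplecticForm n u v

/-- The toric moment map `μ : ℂⁿ → ℝⁿ`, `μ(z) = π(|z₁|², …, |zₙ|²)`. -/
def toricMoment (n : ℕ) (z : Fin n → ℂ) : Fin n → ℝ :=
  fun j => Real.pi * Complex.normSq (z j)

/-- The toric domain `X_Ω := μ⁻¹(Ω) ⊆ ℂⁿ`. -/
def toricDomain (n : ℕ) (Ω : Set (Fin n → ℝ)) : Set (Fin n → ℂ) :=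
  toricMoment n ⁻¹' Ω

/-- `int₊(Ω) := interior(Ω) ∩ ℝⁿ_{>0}`. -/
def intPos (n : ℕ) (Ω : Set (Fin n → ℝ)) : Set (Fin n → ℝ) :=
  interior Ω ∩ {x | ∀ i, 0 < x i}

/-- `Ω ⊆ ℝⁿ_{≥0}` is a monotone domain. -/
def IsMonotoneDomain (n : ℕ) (Ω : Set (Fin n → ℝ)) : Prop :=
  IsCompact Ω ∧ Ω ⊆ {x | ∀ i, 0 ≤ x i} ∧
  (∃ U : Set (Fin n → ℝ), U.Nonempty ∧ Bornology.IsBounded U ∧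
      (∃ V : Set (Fin n → ℝ), IsOpen V ∧ U = V ∩ {x | ∀ i, 0 ≤ x i}) ∧
      Ω = closure U) ∧
  (∀ p ∈ Ω, ∀ q : Fin n → ℝ, (∀ i, 0 ≤ q i) → (∀ i, q i ≤ p i) → q ∈ Ω)

/-- The open Euclidean ball `B^{2n}(r) ⊆ ℂⁿ`. -/
def euclideanBall (n : ℕ) (r : ℝ) : Set (Fin n → ℂ) :=
  {z | ∑ j, Complex.normSq (z j) < r ^ 2}

/-- The open symplectic cylinder `Z^{2n}(r) = {z : |z₁| < r}`. -/
def sympCylinder (n : ℕ) [NeZero n] (r : ℝ) : Set (Fin n → ℂ) :=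
  {z | Complex.normSq (z 0) < r ^ 2}

/-- The cube `P^{2n}(r) = μ⁻¹({x ∈ ℝⁿ_{≥0} : xᵢ ≤ πr² for all i})`. -/
def cubeP (n : ℕ) (r : ℝ) : Set (Fin n → ℂ) :=
  toricDomain n {x | (∀ i, 0 ≤ x i) ∧ ∀ i, x i ≤ Real.pi * r ^ 2}

/-- The anti-cube `N^{2n}(r) = μ⁻¹({x ∈ ℝⁿ_{≥0} : xᵢ ≤ πr² for some i})`. -/
def cubeN (n : ℕ) (r : ℝ) : Set (Fin n → ℂ) :=
  toricDomain n {x | (∀ i, 0 ≤ x i) ∧ ∃ i, x i ≤ Real.pi * r ^ 2}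

/-- A (ball-)normalized symplectic capacity on subsets of `ℝ^{2n}`. -/
def IsNormalizedCapacity (n : ℕ) [NeZero n] (c : Set (Fin n → ℂ) → ℝ≥0∞) : Prop :=
  (∀ U V : Set (Fin n → ℂ), SymplecticEmbeds n U V → c U ≤ c V) ∧
  (∀ lam : ℝ, 0 < lam → ∀ U : Set (Fin n → ℂ),
    c (lam • U) = ENNReal.ofReal (lam ^ 2) * c U) ∧
  (∀ r : ℝ, 0 < r →
    c (euclideanBall n r) = ENNReal.ofReal (Real.pi * r ^ 2) ∧
    c (sympCylinder n r) = ENNReal.ofReal (Real.pi * r ^ 2))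

/-- A cube-normalized symplectic capacity on subsets of `ℝ^{2n}`. -/
def IsCubeNormalizedCapacity (n : ℕ) (c : Set (Fin n → ℂ) → ℝ≥0∞) : Prop :=
  (∀ U V : Set (Fin n → ℂ), SymplecticEmbeds n U V → c U ≤ c V) ∧
  (∀ lam : ℝ, 0 < lam → ∀ U : Set (Fin n → ℂ),
    c (lam • U) = ENNReal.ofReal (lam ^ 2) * c U) ∧
  (∀ r : ℝ, 0 < r →
    c (cubeP n r) = ENNReal.ofReal (Real.pi * r ^ 2) ∧
    c (cubeN n r) = ENNReal.ofReal (Real.pi * r ^ 2))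

open Filter
open scoped Topology ContDiff

/-!
Whenever `r < R`, either the inner model of radius `r` (ball, cube) embeds into `X_{int(Ω)}`, or
`X_{int(Ω)}` embeds into the outer model of radius `R` (cylinder, anti-cube); this leaves a single
possible value for a normalized capacity.

If `Ω` contains a simplex or cube larger than that of the inner model, the inner model embeds
because a disc embeds into a slightly larger punctured disc. Otherwise there is `p ∉ Ω` with
`p₁ + ⋯ + pₙ < π R²` (or `p = (π R², …, π R²)`), and as `Ω` is downward closed every point of
`X_{int(Ω)}` has some area `π |zᵢ|² < pᵢ`. For the anti-cube this is all that is needed. For the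
cylinder, two coordinates are collapsed into one: whenever `π |z₁|² < p` or `π |z₂|² < q`, the new
coordinate has area less than `p + q + ε`. Iterating gives one coordinate of area less than
`p₁ + ⋯ + pₙ + ε`.

The collapse passes from the areas `(x₁, x₂)` to `(N, x₂)` with `N = x₁ + x₂`, replaces `x₂` by
some `x'`, and returns `N - x' + ε`. To raise `x'` where `x₂ < q`, the second coordinate is warped
with an `N`-dependent generating function in polar coordinates: the area beyond `q` is spread along
a cardioid notched at the negative axis, the rest is concentrated in a thin spike along that axis.
A small translation pushes the spike out of the cardioid, into the notch, and a second warp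
straightens everything out; comparing the regions before and after the translation bounds `x'`.
The same notch, moved over the origin, embeds the disc into the punctured disc.

The warps are given only implicitly by their generating functions, so all maps are tracked through
relations between the areas of a point and of its image.
-/

/-! ### Form-preserving embeddings with prescribed relations -/

section FormPreserving

variable {E : Type*} [NormedAddCommGroup E] [NormedSpace ℝ E] {σ : E → E → ℝ} {U V : Set E}
  {R S : E → E → Prop}

/-- `EmbedsWith σ U R`: the set `U`, in practice open, admits a smooth injective map that
preserves `σ` and moves each `x ∈ U` to a point related to `x` by `R`. The map itself is not
recorded because the estimates below only concern the areas of coordinates, which `R` controls. -/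
def EmbedsWith (σ : E → E → ℝ) (U : Set E) (R : E → E → Prop) : Prop :=
  ∃ f : E → E, ContDiffOn ℝ ∞ f U ∧ InjOn f U ∧ (∀ x ∈ U, R x (f x)) ∧
    ∀ x ∈ U, ∀ h k : E, σ (fderiv ℝ f x h) (fderiv ℝ f x k) = σ h k

theorem EmbedsWith.mono (hU : EmbedsWith σ U R) (hVU : V ⊆ U)
    (hRS : ∀ x ∈ V, ∀ y, R x y → S x y) : EmbedsWith σ V S := by
  obtain ⟨f, hf, hinj, hR, hσ⟩ := hU
  exact ⟨f, hf.mono hVU, hinj.mono hVU, fun x hx => hRS x hx _ (hR x (hVU hx)),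
    fun x hx => hσ x (hVU hx)⟩

theorem EmbedsWith.comp (hUo : IsOpen U) (hVo : IsOpen V) (hU : EmbedsWith σ U R)
    (hV : EmbedsWith σ V S) (hR : ∀ x ∈ U, ∀ y, R x y → y ∈ V) :
    EmbedsWith σ U (fun x z => ∃ y, R x y ∧ S y z) := by
  obtain ⟨f, hf, hfinj, hfR, hfσ⟩ := hU
  obtain ⟨g, hg, hginj, hgS, hgσ⟩ := hV
  have hfUV : MapsTo f U V := fun x hx => hR x hx _ (hfR x hx)
  refine ⟨g ∘ f, hg.comp hf hfUV, hginj.comp hfinj hfUV,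
    fun x hx => ⟨f x, hfR x hx, hgS _ (hfUV hx)⟩, fun x hx h k => ?_⟩
  have hfx : DifferentiableAt ℝ f x :=
    (hf.contDiffAt (hUo.mem_nhds hx)).differentiableAt (by simp)
  have hgfx : DifferentiableAt ℝ g (f x) :=
    (hg.contDiffAt (hVo.mem_nhds (hfUV hx))).differentiableAt (by simp)
  rw [fderiv_comp x hgfx hfx, ContinuousLinearMap.comp_apply, ContinuousLinearMap.comp_apply,
    hgσ _ (hfUV hx), hfσ x hx]

theorem EmbedsWith.refl (σ : E → E → ℝ) (U : Set E) : EmbedsWith σ U (fun x y => y = x) :=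
  ⟨fun x => x, contDiffOn_id, injOn_id U, fun _ _ => rfl, fun x _ h k => by simp⟩

theorem exists_equiv_hasFDerivAt_invFunOn [FiniteDimensional ℝ E] {M : Set E}
    (hM : IsOpen M) {A : E → E} (hA : ContDiffOn ℝ ∞ A M) (hinj : InjOn A M) {m : E} (hm : m ∈ M)
    (hker : ∀ h, fderiv ℝ A m h = 0 → h = 0) :
    ∃ A' : E ≃L[ℝ] E, (A' : E →L[ℝ] E) = fderiv ℝ A m ∧
      ContDiffAt ℝ ∞ (Function.invFunOn A M) (A m) ∧
      HasFDerivAt (Function.invFunOn A M) (A'.symm : E →L[ℝ] E) (A m) := by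
  have : CompleteSpace E := FiniteDimensional.complete ℝ E
  have hAm : ContDiffAt ℝ ∞ A m := hA.contDiffAt (hM.mem_nhds hm)
  have hder_inj : Function.Injective (fderiv ℝ A m).toLinearMap :=
    (injective_iff_map_eq_zero _).2 hker
  let A' : E ≃L[ℝ] E := (LinearEquiv.ofInjectiveEndo _ hder_inj).toContinuousLinearEquiv
  have hA' : (A' : E →L[ℝ] E) = fderiv ℝ A m := by ext h; rfl
  have hder : HasFDerivAt A (A' : E →L[ℝ] E) m :=
    hA' ▸ (hAm.differentiableAt (by simp)).hasFDerivAt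
  have hn : (∞ : WithTop ℕ∞) ≠ 0 := by simp
  have hloc := hAm.to_localInverse hder hn
  have hstrict := hAm.hasStrictFDerivAt' hder hn
  have hmem : ∀ᶠ y in 𝓝 (A m), hAm.localInverse hder hn y ∈ M := by
    apply hloc.continuousAt
    rw [hAm.localInverse_apply_image hder hn]
    exact hM.mem_nhds hm
  have heq : Function.invFunOn A M =ᶠ[𝓝 (A m)] hAm.localInverse hder hn := by
    filter_upwards [hstrict.eventually_right_inverse, hmem] with y hy hyM
    rw [← hinj.leftInvOn_invFunOn hyM]
    exact congrArg _ hy.symm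
  exact ⟨A', hA', hloc.congr_of_eventuallyEq heq,
    hstrict.to_localInverse.hasFDerivAt.congr_of_eventuallyEq heq⟩

theorem EmbedsWith.of_parametrizations [FiniteDimensional ℝ E] {M : Set E} (hM : IsOpen M)
    {A B : E → E} (hA : ContDiffOn ℝ ∞ A M) (hB : ContDiffOn ℝ ∞ B M)
    (hAinj : InjOn A M) (hBinj : InjOn B M) (hker : ∀ m ∈ M, ∀ h, fderiv ℝ A m h = 0 → h = 0)
    (hσ : ∀ m ∈ M, ∀ h k,
      σ (fderiv ℝ A m h) (fderiv ℝ A m k) = σ (fderiv ℝ B m h) (fderiv ℝ B m k)) :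
    EmbedsWith σ (A '' M) (fun x y => ∃ m ∈ M, A m = x ∧ B m = y) := by
  set g := Function.invFunOn A M
  have hgA : ∀ m ∈ M, g (A m) = m := fun m hm => hAinj.leftInvOn_invFunOn hm
  refine ⟨B ∘ g, ?_, ?_, ?_, ?_⟩
  · rintro _ ⟨m, hm, rfl⟩
    obtain ⟨-, -, hg, -⟩ := exists_equiv_hasFDerivAt_invFunOn hM hA hAinj hm (hker m hm)
    have hBm : ContDiffAt ℝ ∞ B (g (A m)) := by
      rw [hgA m hm]; exact hB.contDiffAt (hM.mem_nhds hm)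
    exact (hBm.comp _ hg).contDiffWithinAt
  · rintro _ ⟨m, hm, rfl⟩ _ ⟨m', hm', rfl⟩ h
    rw [Function.comp_apply, Function.comp_apply, hgA m hm, hgA m' hm'] at h
    rw [hBinj hm hm' h]
  · rintro _ ⟨m, hm, rfl⟩
    exact ⟨m, hm, rfl, by rw [Function.comp_apply, hgA m hm]⟩
  · rintro _ ⟨m, hm, rfl⟩ h k
    obtain ⟨A', hA', -, hg⟩ := exists_equiv_hasFDerivAt_invFunOn hM hA hAinj hm (hker m hm)
    have hBm : HasFDerivAt B (fderiv ℝ B m) (g (A m)) := by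
      rw [hgA m hm]
      exact ((hB.contDiffAt (hM.mem_nhds hm)).differentiableAt (by simp)).hasFDerivAt
    rw [(hBm.comp _ hg).fderiv, ContinuousLinearMap.comp_apply, ContinuousLinearMap.comp_apply,
      ← hσ m hm, ← hA']
    simp

end FormPreserving

/-! ### Area and angle in the plane -/

section PlanarForm

/-- The standard area form on `ℂ`. -/
def planarForm (h k : ℂ) : ℝ := ((starRingEnd ℂ) h * k).im

/-- The standard symplectic form on `ℂ × ℂ`. -/
def splitForm (h k : ℂ × ℂ) : ℝ := planarForm h.1 k.1 + planarForm h.2 k.2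

/-- The area of the disk centred at the origin with `η` on its boundary: the coordinate of the
toric moment map. -/
def area (η : ℂ) : ℝ := Real.pi * Complex.normSq η

/-- The differential of `area` at `η`. -/
def areaForm (η : ℂ) : ℂ →L[ℝ] ℝ := (2 * Real.pi) • innerSL ℝ η

/-- The differential at `η ≠ 0` of the angular coordinate, normalized so that a full turn
is `1`. -/
def angleForm (η : ℂ) : ℂ →L[ℝ] ℝ :=
  (2 * Real.pi)⁻¹ • Complex.imCLM.comp (ContinuousLinearMap.mul ℝ ℂ η⁻¹)

theorem planarForm_apply (h k : ℂ) : planarForm h k = h.re * k.im - h.im * k.re := by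
  simp [planarForm]; ring

theorem areaForm_apply (η h : ℂ) :
    areaForm η h = 2 * Real.pi * (η.re * h.re + η.im * h.im) := by
  simp [areaForm, Complex.inner]; ring

theorem angleForm_apply (η h : ℂ) : angleForm η h = (η⁻¹ * h).im / (2 * Real.pi) := by
  simp [angleForm]; ring

theorem splitForm_nondegenerate {h : ℂ × ℂ} (hh : ∀ k, splitForm h k = 0) : h = 0 := by
  have hself := hh (Complex.I * h.1, Complex.I * h.2)
  simp only [splitForm, planarForm_apply, Complex.mul_im, Complex.mul_re, Complex.I_re,
    Complex.I_im] at hself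
  refine Prod.ext (Complex.ext ?_ ?_) (Complex.ext ?_ ?_) <;> simp only [Prod.fst_zero,
    Prod.snd_zero, Complex.zero_re, Complex.zero_im] <;>
    nlinarith [sq_nonneg h.1.re, sq_nonneg h.1.im, sq_nonneg h.2.re, sq_nonneg h.2.im]

theorem fderiv_ker_eq_bot_of_splitForm_eq {A B : ℂ × ℂ → ℂ × ℂ} {m : ℂ × ℂ}
    (hker : ∀ h, fderiv ℝ A m h = 0 → h = 0)
    (hσ : ∀ h k, splitForm (fderiv ℝ A m h) (fderiv ℝ A m k) =
      splitForm (fderiv ℝ B m h) (fderiv ℝ B m k)) {h : ℂ × ℂ} (hh : fderiv ℝ B m h = 0) :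
    h = 0 := by
  have hsurj := LinearMap.surjective_of_injective
    ((injective_iff_map_eq_zero (fderiv ℝ A m).toLinearMap).2 hker)
  refine hker h (splitForm_nondegenerate fun k => ?_)
  obtain ⟨k, rfl⟩ := hsurj k
  exact (hσ h k).trans (by simp [hh, splitForm, planarForm])

theorem area_nonneg (η : ℂ) : 0 ≤ area η := mul_nonneg Real.pi_pos.le (Complex.normSq_nonneg _)

theorem area_pos {η : ℂ} (hη : η ≠ 0) : 0 < area η :=
  mul_pos Real.pi_pos (Complex.normSq_pos.2 hη)

theorem area_zero : area 0 = 0 := by simp [area]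

theorem area_eq_norm (η : ℂ) : area η = Real.pi * ‖η‖ ^ 2 := by
  rw [area, Complex.normSq_eq_norm_sq]

theorem area_eq_re_im (η : ℂ) : area η = Real.pi * (η.re ^ 2 + η.im ^ 2) := by
  rw [area, Complex.normSq_apply]; ring

theorem ne_zero_of_area_pos {η : ℂ} (h : 0 < area η) : η ≠ 0 := by
  rintro rfl
  exact h.ne' area_zero

theorem area_eq_zero {η : ℂ} : area η = 0 ↔ η = 0 :=
  ⟨fun h => by_contra fun hη => (area_pos hη).ne' h, fun h => h ▸ area_zero⟩

theorem area_real_mul (r : ℝ) (η : ℂ) : area (r * η) = r ^ 2 * area η := by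
  simp only [area, Complex.normSq_mul, Complex.normSq_ofReal]; ring

theorem norm_eq_of_area_eq {a b : ℂ} (h : area a = area b) : ‖a‖ = ‖b‖ := by
  rw [area_eq_norm, area_eq_norm] at h
  exact (sq_eq_sq₀ (norm_nonneg _) (norm_nonneg _)).1 (mul_left_cancel₀ Real.pi_pos.ne' h)

theorem contDiff_area : ContDiff ℝ ∞ area := by
  rw [funext area_eq_norm]
  exact contDiff_const.mul (contDiff_norm_sq ℝ)

theorem hasFDerivAt_area (η : ℂ) : HasFDerivAt area (areaForm η) η := by
  refine (((hasStrictFDerivAt_norm_sq η).hasFDerivAt.const_mul Real.pi).congr_of_eventuallyEq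
    (Eventually.of_forall area_eq_norm)).congr_fderiv ?_
  ext h
  simp [areaForm]; ring

theorem areaForm_eq_re {η : ℂ} (hη : η ≠ 0) (h : ℂ) :
    areaForm η h = 2 * area η * (η⁻¹ * h).re := by
  obtain ⟨a, rfl⟩ : ∃ a, h = η * a := ⟨η⁻¹ * h, (mul_inv_cancel_left₀ hη h).symm⟩
  rw [inv_mul_cancel_left₀ hη, areaForm_apply, area_eq_re_im]
  simp only [Complex.mul_re, Complex.mul_im]
  ring

theorem angleForm_two_pi_I_mul {η : ℂ} (hη : η ≠ 0) :
    angleForm η (2 * Real.pi * Complex.I * η) = 1 := by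
  rw [angleForm_apply, mul_comm, mul_inv_cancel_right₀ hη]
  simp [Real.pi_ne_zero]

theorem eq_angleForm_smul_add {η : ℂ} (hη : η ≠ 0) (h : ℂ) :
    h = angleForm η h • (2 * Real.pi * Complex.I * η) + (η⁻¹ * h).re • η := by
  have hpi : (Real.pi : ℂ) ≠ 0 := by exact_mod_cast Real.pi_ne_zero
  have hsplit := Complex.re_add_im (η⁻¹ * h)
  rw [angleForm_apply, Complex.real_smul, Complex.real_smul]
  push_cast
  field_simp
  rw [add_comm, mul_comm _ Complex.I, mul_comm Complex.I, ← div_eq_inv_mul] at *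
  linear_combination (-1 : ℂ) * η * hsplit - mul_div_cancel₀ h hη

theorem planarForm_eq_areaForm_angleForm {η : ℂ} (hη : η ≠ 0) (h k : ℂ) :
    planarForm h k = areaForm η h * angleForm η k - angleForm η h * areaForm η k := by
  obtain ⟨a, rfl⟩ : ∃ a, h = η * a := ⟨η⁻¹ * h, (mul_inv_cancel_left₀ hη h).symm⟩
  obtain ⟨b, rfl⟩ : ∃ b, k = η * b := ⟨η⁻¹ * k, (mul_inv_cancel_left₀ hη k).symm⟩
  have hpi := Real.pi_ne_zero
  rw [areaForm_eq_re hη, areaForm_eq_re hη, angleForm_apply, angleForm_apply,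
    inv_mul_cancel_left₀ hη, inv_mul_cancel_left₀ hη, planarForm_apply, area_eq_re_im]
  simp only [Complex.mul_re, Complex.mul_im]
  field_simp
  ring

theorem eq_zero_of_areaForm_angleForm {η h : ℂ} (hη : η ≠ 0) (harea : areaForm η h = 0)
    (hangle : angleForm η h = 0) : h = 0 := by
  rw [areaForm_eq_re hη] at harea
  have hre : (η⁻¹ * h).re = 0 :=
    (mul_eq_zero.1 harea).resolve_left (mul_pos two_pos (area_pos hη)).ne'
  rw [eq_angleForm_smul_add hη h, hangle, hre, zero_smul, zero_smul, add_zero]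

end PlanarForm

section RotationsAndRescalings

/-- The unit complex number at `t` turns from `1`. -/
def turn (t : ℝ) : ℂ := Complex.exp ((2 * Real.pi * t : ℝ) * Complex.I)

theorem norm_turn (t : ℝ) : ‖turn t‖ = 1 := Complex.norm_exp_ofReal_mul_I _

theorem turn_ne_zero (t : ℝ) : turn t ≠ 0 := Complex.exp_ne_zero _

theorem turn_add (s t : ℝ) : turn (s + t) = turn s * turn t := by
  simp only [turn, ← Complex.exp_add]; congr 1; push_cast; ring

theorem turn_zero : turn 0 = 1 := by simp [turn]

theorem turn_intCast (k : ℤ) : turn k = 1 := by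
  rw [turn, Complex.exp_eq_one_iff]; exact ⟨k, by push_cast; ring⟩

theorem exists_int_of_turn_eq {s t : ℝ} (h : turn s = turn t) : ∃ k : ℤ, s = t + k := by
  rw [turn, turn, Complex.exp_eq_exp_iff_exists_int] at h
  obtain ⟨k, hk⟩ := h
  have hmul : ((2 * Real.pi * s : ℝ) : ℂ) * Complex.I =
      ((2 * Real.pi * (t + k) : ℝ) : ℂ) * Complex.I := by
    rw [hk]; push_cast; ring
  have hreal : 2 * Real.pi * s = 2 * Real.pi * (t + k) := by
    exact_mod_cast mul_right_cancel₀ Complex.I_ne_zero hmul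
  exact ⟨k, mul_left_cancel₀ (by positivity) hreal⟩

theorem area_mul_of_norm_eq_one {e : ℂ} (he : ‖e‖ = 1) (η : ℂ) : area (e * η) = area η := by
  rw [area_eq_norm, area_eq_norm, norm_mul, he, one_mul]

theorem exists_eq_norm_mul_turn (η : ℂ) : ∃ t : ℝ, η = (‖η‖ : ℂ) * turn t := by
  refine ⟨Complex.arg η / (2 * Real.pi), ?_⟩
  rw [turn, mul_div_cancel₀ _ (by positivity), Complex.norm_mul_exp_arg_mul_I]

theorem contDiff_turn : ContDiff ℝ ∞ turn :=
  ((Complex.ofRealCLM.contDiff.comp (contDiff_const.mul contDiff_id)).mul contDiff_const).cexp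

theorem hasDerivAt_turn (t : ℝ) : HasDerivAt turn (2 * Real.pi * Complex.I * turn t) t := by
  have h : HasDerivAt (fun t : ℝ => ((2 * Real.pi * t : ℝ) : ℂ) * Complex.I)
      (((2 * Real.pi * 1 : ℝ) : ℂ) * Complex.I) t :=
    (((hasDerivAt_id t).const_mul (2 * Real.pi)).ofReal_comp).mul_const _
  refine h.cexp.congr_deriv ?_
  simp only [turn]; push_cast; ring

variable {E : Type*} [NormedAddCommGroup E] [NormedSpace ℝ E] {p : E}

theorem hasFDerivAt_turn_comp {T : E → ℝ} {T' : E →L[ℝ] ℝ} (hT : HasFDerivAt T T' p) :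
    HasFDerivAt (fun q => turn (T q)) (T'.smulRight (2 * Real.pi * Complex.I * turn (T p))) p := by
  refine ((hasDerivAt_turn (T p)).hasFDerivAt.comp p hT).congr_fderiv ?_
  ext h
  simp

/-- Rotating a plane-valued map by an angle `T` adds `d(area) ∧ dT` to the pulled back area
form. -/
theorem planarForm_fderiv_rotate {e g : E → ℂ} {T' : E →L[ℝ] ℝ} {g' : E →L[ℝ] ℂ}
    (he : HasFDerivAt e (T'.smulRight (2 * Real.pi * Complex.I * e p)) p) (hnorm : ‖e p‖ = 1)
    (hg : HasFDerivAt g g' p) (h k : E) :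
    planarForm (fderiv ℝ (fun q => e q * g q) p h) (fderiv ℝ (fun q => e q * g q) p k) =
      planarForm (g' h) (g' k) + (areaForm (g p) (g' h) * T' k - T' h * areaForm (g p) (g' k)) := by
  have hsq : (e p).re ^ 2 + (e p).im ^ 2 = 1 := by
    rw [← one_pow 2, ← hnorm, ← Complex.normSq_eq_norm_sq, Complex.normSq_apply]; ring
  rw [HasFDerivAt.fderiv (f := fun q => e q * g q) (he.mul hg)]
  simp only [planarForm_apply, areaForm_apply, add_apply, smul_apply,
    ContinuousLinearMap.smulRight_apply, smul_eq_mul, Complex.real_smul,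
    Complex.add_re, Complex.add_im, Complex.mul_re, Complex.mul_im, Complex.ofReal_re,
    Complex.ofReal_im, Complex.I_re, Complex.I_im, Complex.re_ofNat, Complex.im_ofNat]
  linear_combination ((g' h).re * (g' k).im - (g' h).im * (g' k).re +
    2 * Real.pi * (((g p).re * (g' h).re + (g p).im * (g' h).im) * T' k -
      T' h * ((g p).re * (g' k).re + (g p).im * (g' k).im))) * hsq

/-- The point of area `u` on the ray through `z ≠ 0`. -/
def withArea (u : ℝ) (z : ℂ) : ℂ := (Real.sqrt (u / area z) : ℂ) * z

theorem withArea_ne_zero {u : ℝ} {z : ℂ} (hu : 0 < u) (hz : z ≠ 0) : withArea u z ≠ 0 :=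
  mul_ne_zero (by exact_mod_cast (Real.sqrt_pos.2 (div_pos hu (area_pos hz))).ne') hz

theorem area_withArea {u : ℝ} {z : ℂ} (hu : 0 ≤ u) (hz : z ≠ 0) : area (withArea u z) = u := by
  rw [withArea, area_real_mul, Real.sq_sqrt (div_nonneg hu (area_nonneg z)),
    div_mul_cancel₀ _ (area_pos hz).ne']

theorem withArea_area (z : ℂ) : withArea (area z) z = z := by
  rcases eq_or_ne z 0 with rfl | hz
  · simp [withArea]
  · rw [withArea, div_self (area_pos hz).ne', Real.sqrt_one, Complex.ofReal_one, one_mul]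

theorem withArea_withArea {u v : ℝ} {z : ℂ} (hu : 0 < u) (hz : z ≠ 0) :
    withArea v (withArea u z) = withArea v z := by
  rw [withArea, area_withArea hu.le hz, withArea, withArea, ← mul_assoc, ← Complex.ofReal_mul,
    Real.sqrt_div' _ hu.le, Real.sqrt_div' _ (area_nonneg z), Real.sqrt_div' _ (area_nonneg z),
    div_mul_div_cancel₀ (Real.sqrt_pos.2 hu).ne']

theorem contDiffAt_withArea {u : E → ℝ} {g : E → ℂ} (hu : ContDiffAt ℝ ∞ u p)
    (hg : ContDiffAt ℝ ∞ g p) (hup : 0 < u p) (hgp : g p ≠ 0) :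
    ContDiffAt ℝ ∞ (fun q => withArea (u q) (g q)) p :=
  (Complex.ofRealCLM.contDiff.contDiffAt.comp p
    ((hu.div (contDiff_area.contDiffAt.comp p hg) (area_pos hgp).ne').sqrt
      (div_pos hup (area_pos hgp)).ne')).mul hg

theorem areaForm_angleForm_fderiv_withArea {u : E → ℝ} {g : E → ℂ} {u' : E →L[ℝ] ℝ}
    {g' : E →L[ℝ] ℂ} (hu : HasFDerivAt u u' p) (hg : HasFDerivAt g g' p) (hup : 0 < u p)
    (hgp : g p ≠ 0) (h : E) :
    areaForm (withArea (u p) (g p)) (fderiv ℝ (fun q => withArea (u q) (g q)) p h) = u' h ∧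
    angleForm (withArea (u p) (g p)) (fderiv ℝ (fun q => withArea (u q) (g q)) p h) =
      angleForm (g p) (g' h) := by
  have harea : DifferentiableAt ℝ (fun q => area (g q)) p :=
    ((hasFDerivAt_area _).comp p hg).differentiableAt
  have hsqrt : DifferentiableAt ℝ (fun q => Real.sqrt (u q / area (g q))) p :=
    DifferentiableAt.sqrt (hu.differentiableAt.mul (harea.fun_inv (area_pos hgp).ne'))
      (div_pos hup (area_pos hgp)).ne'
  have hf : HasFDerivAt (fun q => withArea (u q) (g q)) _ p :=
    (Complex.ofRealCLM.hasFDerivAt.comp p hsqrt.hasFDerivAt).mul hg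
  constructor
  · have hloc : (fun q => area (withArea (u q) (g q))) =ᶠ[𝓝 p] u := by
      filter_upwards [hu.continuousAt.eventually_const_lt hup,
        hg.continuousAt.eventually_ne hgp] with q hq hgq using area_withArea hq.le hgq
    have hcomp := (hasFDerivAt_area (withArea (u p) (g p))).comp p hf
    exact DFunLike.congr_fun
      (hf.fderiv.symm ▸ hcomp.unique (hu.congr_of_eventuallyEq hloc)) h
  · set ρ := fun q => Real.sqrt (u q / area (g q))
    have hρ : (ρ p : ℂ) ≠ 0 := by
      exact_mod_cast (Real.sqrt_pos.2 (div_pos hup (area_pos hgp))).ne'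
    have hsplit : (ρ p * g p)⁻¹ * (ρ p * g' h + g p * (fderiv ℝ ρ p h : ℝ)) =
        (g p)⁻¹ * g' h + ((fderiv ℝ ρ p h / ρ p : ℝ) : ℂ) := by
      push_cast
      field_simp
    rw [hf.fderiv, angleForm_apply, angleForm_apply]
    refine congrArg (· / (2 * Real.pi)) ((congrArg Complex.im hsplit).trans ?_)
    rw [Complex.add_im, Complex.ofReal_im, add_zero]

theorem planarForm_fderiv_withArea {u : E → ℝ} {g : E → ℂ} {u' : E →L[ℝ] ℝ}
    {g' : E →L[ℝ] ℂ} (hu : HasFDerivAt u u' p) (hg : HasFDerivAt g g' p) (hup : 0 < u p)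
    (hgp : g p ≠ 0) (h k : E) :
    planarForm (fderiv ℝ (fun q => withArea (u q) (g q)) p h)
        (fderiv ℝ (fun q => withArea (u q) (g q)) p k) =
      u' h * angleForm (g p) (g' k) - angleForm (g p) (g' h) * u' k := by
  obtain ⟨hh, hh'⟩ := areaForm_angleForm_fderiv_withArea hu hg hup hgp h
  obtain ⟨hk, hk'⟩ := areaForm_angleForm_fderiv_withArea hu hg hup hgp k
  rw [planarForm_eq_areaForm_angleForm (withArea_ne_zero hup hgp), hh, hh', hk, hk']

end RotationsAndRescalings

/-! ### Generating functions in polar coordinates -/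

section PolarGenerators

/-- `F (η, x, N)` is a generating function in polar coordinates for the relation
`area ζ = x + G (ζ, x, N)` between a point `ζ` and the area `x` of a second point: it depends on
`η` only through its direction, `G` is its derivative in the angle of `η`, and `x ↦ x + G (η, x, N)`
is an expanding map of the half-line fixing `0`. The parameter `N` is the area of a further
coordinate. -/
structure IsPolarGenerator (F G : ℂ × ℝ × ℝ → ℝ) : Prop where
  contDiffAt : ∀ q, q.1 ≠ 0 → ContDiffAt ℝ ∞ F q
  homogeneous : ∀ r : ℝ, 0 < r → ∀ η y, F (r * η, y) = F (η, y)
  angular : ∀ q, q.1 ≠ 0 → fderiv ℝ F q (2 * Real.pi * Complex.I * q.1, 0) = G q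
  angular_zero : ∀ η N, 0 ≤ N → G (η, 0, N) = 0
  expanding : ∃ m > 0, ∀ η, η ≠ 0 → ∀ N, 0 ≤ N → ∀ x y, 0 ≤ x → x ≤ y →
    m * (y - x) ≤ (y + G (η, y, N)) - (x + G (η, x, N))

namespace IsPolarGenerator

variable {F G : ℂ × ℝ × ℝ → ℝ} (hF : IsPolarGenerator F G)
include hF

theorem differentiableAt {q : ℂ × ℝ × ℝ} (hq : q.1 ≠ 0) : DifferentiableAt ℝ F q :=
  (hF.contDiffAt q hq).differentiableAt (by simp)

theorem contDiffAt_fderiv {q : ℂ × ℝ × ℝ} (hq : q.1 ≠ 0) : ContDiffAt ℝ ∞ (fderiv ℝ F) q :=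
  (hF.contDiffAt q hq).fderiv_right (m := ∞) (by simp)

theorem hasFDerivAt_fderiv {q : ℂ × ℝ × ℝ} (hq : q.1 ≠ 0) :
    HasFDerivAt (fderiv ℝ F) (fderiv ℝ (fderiv ℝ F) q) q :=
  ((hF.contDiffAt_fderiv hq).differentiableAt (by simp)).hasFDerivAt

theorem fderiv_real_mul {r : ℝ} (hr : 0 < r) {η : ℂ} (hη : η ≠ 0) (y : ℝ × ℝ) (h : ℂ)
    (v : ℝ × ℝ) : fderiv ℝ F (r * η, y) (r * h, v) = fderiv ℝ F (η, y) (h, v) := by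
  let L : ℂ × ℝ × ℝ →L[ℝ] ℂ × ℝ × ℝ :=
    (r • ContinuousLinearMap.fst ℝ ℂ (ℝ × ℝ)).prod (ContinuousLinearMap.snd ℝ ℂ (ℝ × ℝ))
  have hL : ∀ a v, L (a, v) = (r * a, v) := fun a v => Prod.ext (Complex.real_smul ..) rfl
  have hFL : F ∘ L = F := funext fun q => by
    rw [Function.comp_apply, hL, hF.homogeneous r hr]
  have hrη : (L (η, y)).1 ≠ 0 := by
    rw [hL]; exact mul_ne_zero (by exact_mod_cast hr.ne') hη
  have hcomp := (hF.differentiableAt hrη).hasFDerivAt.comp (η, y) L.hasFDerivAt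
  rw [hFL] at hcomp
  rw [hcomp.fderiv, ContinuousLinearMap.comp_apply, hL, hL]

theorem fderiv_radial {q : ℂ × ℝ × ℝ} (hq : q.1 ≠ 0) : fderiv ℝ F q (q.1, 0) = 0 := by
  have hray : HasDerivAt (fun r : ℝ => ((r : ℂ) * q.1, q.2)) (q.1, (0 : ℝ × ℝ)) 1 := by
    simpa using ((hasDerivAt_id (1 : ℝ)).ofReal_comp.mul_const q.1).prodMk
      (hasDerivAt_const (1 : ℝ) q.2)
  have hone : (((1 : ℝ) : ℂ) * q.1, q.2) = q := by simp
  have hFq : HasFDerivAt F (fderiv ℝ F q) (((1 : ℝ) : ℂ) * q.1, q.2) := by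
    rw [hone]
    exact (hF.differentiableAt hq).hasFDerivAt
  have hcomp := hFq.comp_hasDerivAt (f := fun r : ℝ => ((r : ℂ) * q.1, q.2)) 1 hray
  have hconst : F ∘ (fun r : ℝ => ((r : ℂ) * q.1, q.2)) =ᶠ[𝓝 1] fun _ => F q := by
    filter_upwards [lt_mem_nhds one_pos] with r hr using hF.homogeneous r hr _ _
  exact hcomp.unique ((hasDerivAt_const (1 : ℝ) (F q)).congr_of_eventuallyEq hconst)

theorem angular_real_mul {r : ℝ} (hr : 0 < r) {η : ℂ} (hη : η ≠ 0) (y : ℝ × ℝ) :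
    G (r * η, y) = G (η, y) := by
  have hrη : (r : ℂ) * η ≠ 0 := mul_ne_zero (by exact_mod_cast hr.ne') hη
  rw [← hF.angular (r * η, y) hrη, ← hF.angular (η, y) hη, ← hF.fderiv_real_mul hr hη]
  congr 2
  ring

theorem eventuallyEq_angular {q : ℂ × ℝ × ℝ} (hq : q.1 ≠ 0) :
    G =ᶠ[𝓝 q] fun q => fderiv ℝ F q (2 * Real.pi * Complex.I * q.1, 0) := by
  filter_upwards [continuous_fst.continuousAt.eventually_ne hq] with q hq using
    (hF.angular q hq).symm

theorem contDiffAt_angular {q : ℂ × ℝ × ℝ} (hq : q.1 ≠ 0) : ContDiffAt ℝ ∞ G q :=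
  ((hF.contDiffAt_fderiv hq).clm_apply
    ((contDiffAt_const.mul contDiffAt_fst).prodMk contDiffAt_const)).congr_of_eventuallyEq
    (hF.eventuallyEq_angular hq)

theorem fderiv_angular {q : ℂ × ℝ × ℝ} (hq : q.1 ≠ 0) (h : ℂ × ℝ × ℝ) :
    fderiv ℝ G q h = fderiv ℝ (fderiv ℝ F) q h (2 * Real.pi * Complex.I * q.1, 0) +
      (q.1⁻¹ * h.1).re * G q := by
  have hmul : HasFDerivAt (fun q : ℂ × ℝ × ℝ =>
      (2 * Real.pi * Complex.I * q.1, (0 : ℝ × ℝ))) _ q :=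
    ((ContinuousLinearMap.fst ℝ ℂ (ℝ × ℝ)).hasFDerivAt.const_mul _).prodMk (hasFDerivAt_const _ q)
  rw [(hF.eventuallyEq_angular hq).fderiv_eq, ((hF.hasFDerivAt_fderiv hq).clm_apply hmul).fderiv]
  have hsplit : ((2 * Real.pi * Complex.I * h.1, 0) : ℂ × ℝ × ℝ) =
      (q.1⁻¹ * h.1).re • (2 * Real.pi * Complex.I * q.1, 0) -
        (angleForm q.1 h.1 * (2 * Real.pi) ^ 2) • (q.1, 0) := by
    refine Prod.ext ?_ (by simp)
    have := eq_angleForm_smul_add hq h.1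
    simp only [Prod.fst_sub, Prod.smul_fst, Complex.real_smul] at this ⊢
    push_cast
    linear_combination 2 * Real.pi * Complex.I * this +
      (angleForm q.1 h.1 : ℂ) * 4 * Real.pi ^ 2 * q.1 * Complex.I_sq
  have hD : fderiv ℝ F q (2 * Real.pi * Complex.I * h.1, 0) = (q.1⁻¹ * h.1).re * G q := by
    rw [hsplit, map_sub, map_smul, map_smul, hF.angular q hq, hF.fderiv_radial hq, smul_zero,
      sub_zero, smul_eq_mul]
  rw [← hD]
  simp [add_comm]

theorem fderiv_fderiv_radial {q : ℂ × ℝ × ℝ} (hq : q.1 ≠ 0) (h : ℂ × ℝ × ℝ) :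
    fderiv ℝ (fderiv ℝ F) q h (q.1, 0) = -(angleForm q.1 h.1 * G q) := by
  have hmul : HasFDerivAt (fun q : ℂ × ℝ × ℝ => (q.1, (0 : ℝ × ℝ))) _ q :=
    (ContinuousLinearMap.fst ℝ ℂ (ℝ × ℝ)).hasFDerivAt.prodMk (hasFDerivAt_const _ q)
  have hzero : (fun q => fderiv ℝ F q (q.1, 0)) =ᶠ[𝓝 q] fun _ => 0 := by
    filter_upwards [continuous_fst.continuousAt.eventually_ne hq] with q hq using
      hF.fderiv_radial hq
  have hsum := DFunLike.congr_fun (((hF.hasFDerivAt_fderiv hq).clm_apply hmul).unique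
    ((hasFDerivAt_const (0 : ℝ) q).congr_of_eventuallyEq hzero)) h
  have hsplit : ((h.1, 0) : ℂ × ℝ × ℝ) = angleForm q.1 h.1 • (2 * Real.pi * Complex.I * q.1, 0) +
      (q.1⁻¹ * h.1).re • (q.1, 0) :=
    Prod.ext (eq_angleForm_smul_add hq h.1) (by simp)
  have hD : fderiv ℝ F q (h.1, 0) = angleForm q.1 h.1 * G q := by
    rw [hsplit, map_add, map_smul, map_smul, hF.angular q hq, hF.fderiv_radial hq, smul_zero,
      add_zero, smul_eq_mul]
  rw [← hD]
  simp at hsum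
  linarith

theorem fderiv_fderiv_comm {q : ℂ × ℝ × ℝ} (hq : q.1 ≠ 0) (h k : ℂ × ℝ × ℝ) :
    fderiv ℝ (fderiv ℝ F) q h k = fderiv ℝ (fderiv ℝ F) q k h :=
  (hF.contDiffAt q hq).isSymmSndFDerivAt (by simpa using ENat.LEInfty.out) h k

/-- In polar coordinates this is `d(dF) = 0`. -/
theorem fderiv_angular_wedge {q : ℂ × ℝ × ℝ} (hq : q.1 ≠ 0) (h k : ℂ × ℝ × ℝ) :
    fderiv ℝ G q h * angleForm q.1 k.1 - angleForm q.1 h.1 * fderiv ℝ G q k =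
      (h.2.1 * fderiv ℝ (fderiv ℝ F) q k (0, 1, 0) -
        fderiv ℝ (fderiv ℝ F) q h (0, 1, 0) * k.2.1) +
      (h.2.2 * fderiv ℝ (fderiv ℝ F) q k (0, 0, 1) -
        fderiv ℝ (fderiv ℝ F) q h (0, 0, 1) * k.2.2) := by
  have hsplit : ∀ k : ℂ × ℝ × ℝ, k = angleForm q.1 k.1 • (2 * Real.pi * Complex.I * q.1, 0) +
      (q.1⁻¹ * k.1).re • (q.1, 0) + k.2.1 • (0, 1, 0) + k.2.2 • (0, 0, 1) := fun k =>
    Prod.ext (by simpa using eq_angleForm_smul_add hq k.1) (by simp)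
  have hexpand : ∀ h k : ℂ × ℝ × ℝ, fderiv ℝ (fderiv ℝ F) q h k =
      angleForm q.1 k.1 * fderiv ℝ (fderiv ℝ F) q h (2 * Real.pi * Complex.I * q.1, 0) -
      (q.1⁻¹ * k.1).re * (angleForm q.1 h.1 * G q) +
      k.2.1 * fderiv ℝ (fderiv ℝ F) q h (0, 1, 0) +
      k.2.2 * fderiv ℝ (fderiv ℝ F) q h (0, 0, 1) := fun h k => by
    conv_lhs => rw [hsplit k]
    simp only [map_add, map_smul, smul_eq_mul, hF.fderiv_fderiv_radial hq h]
    ring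
  have hsymm := hF.fderiv_fderiv_comm hq h k
  rw [hexpand h k, hexpand k h] at hsymm
  rw [hF.fderiv_angular hq, hF.fderiv_angular hq]
  linear_combination hsymm

theorem fderiv_angular_radial {q : ℂ × ℝ × ℝ} (hq : q.1 ≠ 0) : fderiv ℝ G q (q.1, 0) = 0 := by
  rw [hF.fderiv_angular hq, hF.fderiv_fderiv_comm hq, hF.fderiv_fderiv_radial hq,
    angleForm_two_pi_I_mul hq, inv_mul_cancel₀ hq, Complex.one_re]
  ring

theorem strictMonoOn_add_angular {η : ℂ} (hη : η ≠ 0) {N : ℝ} (hN : 0 ≤ N) :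
    StrictMonoOn (fun x => x + G (η, x, N)) (Ici 0) := by
  obtain ⟨m, hm, hexp⟩ := hF.expanding
  intro x hx y _ hxy
  have := hexp η hη N hN x y hx hxy.le
  have := mul_pos hm (sub_pos.2 hxy)
  simp only
  linarith

theorem add_angular_pos {η : ℂ} (hη : η ≠ 0) {x N : ℝ} (hx : 0 < x) (hN : 0 ≤ N) :
    0 < x + G (η, x, N) := by
  have := hF.strictMonoOn_add_angular hη hN self_mem_Ici hx.le hx
  simpa only [hF.angular_zero η N hN, add_zero] using this

theorem exists_add_angular_eq {η : ℂ} (hη : η ≠ 0) {y N : ℝ} (hy : 0 < y) (hN : 0 ≤ N) :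
    ∃ x, 0 < x ∧ x + G (η, x, N) = y := by
  obtain ⟨m, hm, hexp⟩ := hF.expanding
  have hcont : Continuous fun x => x + G (η, x, N) :=
    continuous_id.add <| continuous_iff_continuousAt.2 fun x =>
      (hF.contDiffAt_angular (q := (η, x, N)) hη).continuousAt.comp
        (f := fun x => (η, x, N)) (by fun_prop)
  have hbig := hexp η hη N hN 0 (y / m) le_rfl (by positivity)
  rw [hF.angular_zero η N hN, sub_zero, mul_div_cancel₀ _ hm.ne', add_zero, sub_zero] at hbig
  obtain ⟨x, hx, hxy⟩ := intermediate_value_Icc (by positivity : 0 ≤ y / m) hcont.continuousOn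
    ⟨by simpa only [hF.angular_zero η N hN, add_zero] using hy.le, hbig⟩
  refine ⟨x, hx.1.lt_of_ne ?_, hxy⟩
  rintro rfl
  simp only [hF.angular_zero η N hN, add_zero] at hxy
  exact hy.ne hxy

theorem one_add_fderiv_angular_pos {q : ℂ × ℝ × ℝ} (hq : q.1 ≠ 0) (hx : 0 < q.2.1)
    (hN : 0 ≤ q.2.2) : 0 < 1 + fderiv ℝ G q (0, 1, 0) := by
  obtain ⟨m, hm, hexp⟩ := hF.expanding
  have hline : HasDerivAt (fun x : ℝ => (q.1, x, q.2.2)) (0, 1, 0) q.2.1 :=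
    (hasDerivAt_const _ _).prodMk ((hasDerivAt_id _).prodMk (hasDerivAt_const _ _))
  have hG : HasDerivAt (fun x => G (q.1, x, q.2.2)) (fderiv ℝ G q (0, 1, 0)) q.2.1 :=
    HasFDerivAt.comp_hasDerivAt (f := fun x : ℝ => (q.1, x, q.2.2)) q.2.1
      ((hF.contDiffAt_angular hq).differentiableAt (by simp)).hasFDerivAt hline
  have hmono : MonotoneOn (fun x => x + G (q.1, x, q.2.2) - m * x) (Ioi 0) := by
    intro x hx y _ hxy
    have := hexp q.1 hq q.2.2 hN x y (le_of_lt hx) hxy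
    simp only
    linarith
  have hnonneg : 0 ≤ 1 + fderiv ℝ G q (0, 1, 0) - m * 1 :=
    (((hasDerivAt_id _).add hG).sub ((hasDerivAt_id _).const_mul m)).hasDerivWithinAt
      |>.nonneg_of_monotoneOn (uniqueDiffWithinAt_iff_accPt.1 (uniqueDiffOn_Ioi 0 _ hx)) hmono
  linarith

theorem angular_withArea {u : ℝ} (hu : 0 < u) {η : ℂ} (hη : η ≠ 0) (y : ℝ × ℝ) :
    G (withArea u η, y) = G (η, y) :=
  hF.angular_real_mul (Real.sqrt_pos.2 (div_pos hu (area_pos hη))) hη y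

end IsPolarGenerator

/-- The point at which a polar generator is evaluated to move `p : ℂ × ℂ`. -/
def polarCoords (p : ℂ × ℂ) : ℂ × ℝ × ℝ := (p.2, area p.2, area p.1)

/-- Moves the second coordinate along its ray, to the area prescribed by the polar generator. -/
def radialMap (G : ℂ × ℝ × ℝ → ℝ) (p : ℂ × ℂ) : ℂ × ℂ :=
  (p.1, withArea (area p.2 + G (polarCoords p)) p.2)

/-- Rotates both coordinates by the angles dual to their areas under the polar generator. The
relation that the generator `F` defines is the graph of `rotationMap F ∘ (radialMap G)⁻¹`. -/
def rotationMap (F : ℂ × ℝ × ℝ → ℝ) (p : ℂ × ℂ) : ℂ × ℂ :=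
  (turn (fderiv ℝ F (polarCoords p) (0, 0, 1)) * p.1,
    turn (fderiv ℝ F (polarCoords p) (0, 1, 0)) * p.2)

/-- `rotationMap F` as a map of the circles `area η = x`, `area z = N`, lifted to the line. -/
def rotationLift (F : ℂ × ℝ × ℝ → ℝ) (x N t : ℝ) : ℝ := t + fderiv ℝ F (turn t, x, N) (0, 1, 0)

theorem rotationLift_add_int (F : ℂ × ℝ × ℝ → ℝ) (x N t : ℝ) (k : ℤ) :
    rotationLift F x N (t + k) = rotationLift F x N t + k := by
  rw [rotationLift, rotationLift, turn_add, turn_intCast, mul_one]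
  ring

theorem area_rotationMap_fst (F : ℂ × ℝ × ℝ → ℝ) (p : ℂ × ℂ) :
    area (rotationMap F p).1 = area p.1 := area_mul_of_norm_eq_one (norm_turn _) _

theorem area_rotationMap_snd (F : ℂ × ℝ × ℝ → ℝ) (p : ℂ × ℂ) :
    area (rotationMap F p).2 = area p.2 := area_mul_of_norm_eq_one (norm_turn _) _

theorem hasFDerivAt_polarCoords (p : ℂ × ℂ) :
    HasFDerivAt polarCoords ((ContinuousLinearMap.snd ℝ ℂ ℂ).prod
      (((areaForm p.2).comp (ContinuousLinearMap.snd ℝ ℂ ℂ)).prod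
        ((areaForm p.1).comp (ContinuousLinearMap.fst ℝ ℂ ℂ)))) p :=
  hasFDerivAt_snd.prodMk (((hasFDerivAt_area _).comp p hasFDerivAt_snd).prodMk
    ((hasFDerivAt_area _).comp p hasFDerivAt_fst))

theorem fderiv_polarCoords_apply (p h : ℂ × ℂ) :
    fderiv ℝ polarCoords p h = (h.2, areaForm p.2 h.2, areaForm p.1 h.1) := by
  rw [(hasFDerivAt_polarCoords p).fderiv]
  rfl

theorem contDiff_polarCoords : ContDiff ℝ ∞ polarCoords :=
  contDiff_snd.prodMk ((contDiff_area.comp contDiff_snd).prodMk (contDiff_area.comp contDiff_fst))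

theorem bijOn_of_eq_self {α : Type*} {f : α → α} {S M : Set α} (hf : BijOn f S S) (hSM : S ⊆ M)
    (hid : ∀ x ∈ M, x ∉ S → f x = x) : BijOn f M M := by
  have hcompl : BijOn f (M \ S) (M \ S) := (bijOn_id _).congr fun x hx => (hid x hx.1 hx.2).symm
  have hinj : InjOn f (S ∪ M \ S) := (injOn_union disjoint_sdiff_right).2
    ⟨hf.injOn, hcompl.injOn, fun x hx y hy h => (hcompl.mapsTo hy).2 (h ▸ hf.mapsTo hx)⟩
  simpa only [union_sdiff_cancel hSM] using hf.union hcompl hinj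

theorem contDiffOn_of_eventuallyEq_id {E : Type*} [NormedAddCommGroup E] [NormedSpace ℝ E]
    {f : E → E} {S M : Set E} (hf : ∀ x ∈ S, ContDiffAt ℝ ∞ f x)
    (hid : ∀ x ∈ M, x ∉ S → f =ᶠ[𝓝 x] id) : ContDiffOn ℝ ∞ f M := by
  intro x hx
  by_cases hxS : x ∈ S
  · exact (hf x hxS).contDiffWithinAt
  · exact (contDiffAt_id.congr_of_eventuallyEq (hid x hx hxS)).contDiffWithinAt

namespace IsPolarGenerator

variable {F G : ℂ × ℝ × ℝ → ℝ} (hF : IsPolarGenerator F G)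
include hF

theorem area_add_angular_pos {p : ℂ × ℂ} (hp : p.2 ≠ 0) :
    0 < area p.2 + G (polarCoords p) :=
  hF.add_angular_pos hp (area_pos hp) (area_nonneg _)

theorem radialMap_snd_ne_zero {p : ℂ × ℂ} (hp : p.2 ≠ 0) : (radialMap G p).2 ≠ 0 :=
  withArea_ne_zero (hF.area_add_angular_pos hp) hp

theorem area_radialMap_snd {p : ℂ × ℂ} (hp : p.2 ≠ 0) : area (radialMap G p).2 =
    area p.2 + G ((radialMap G p).2, area p.2, area p.1) := by
  have hpos := hF.area_add_angular_pos hp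
  rw [radialMap, hF.angular_withArea hpos hp, area_withArea hpos.le hp]
  rfl

theorem contDiffAt_radialMap {p : ℂ × ℂ} (hp : p.2 ≠ 0) : ContDiffAt ℝ ∞ (radialMap G) p :=
  contDiffAt_fst.prodMk <| contDiffAt_withArea
    ((contDiff_area.contDiffAt.comp p contDiffAt_snd).add
      ((hF.contDiffAt_angular hp).comp p contDiff_polarCoords.contDiffAt))
    contDiffAt_snd (hF.area_add_angular_pos hp) hp

theorem injOn_radialMap : InjOn (radialMap G) {p | p.2 ≠ 0} := by
  intro p hp q hq h
  have hfst : p.1 = q.1 := (Prod.ext_iff.1 h).1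
  have hsnd : (radialMap G p).2 = (radialMap G q).2 := (Prod.ext_iff.1 h).2
  have harea : area p.2 = area q.2 := by
    refine (hF.strictMonoOn_add_angular (hF.radialMap_snd_ne_zero hp) (area_nonneg p.1)).injOn
      (area_nonneg p.2) (area_nonneg q.2) ?_
    rw [← hF.area_radialMap_snd hp, hsnd, hfst, ← hF.area_radialMap_snd hq]
  refine Prod.ext hfst ?_
  rw [← withArea_area p.2, ← withArea_withArea (hF.area_add_angular_pos hp) hp]
  refine (congrArg (withArea _) hsnd).trans ?_
  rw [radialMap, withArea_withArea (hF.area_add_angular_pos hq) hq, harea, withArea_area]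

theorem exists_radialMap_eq {q : ℂ × ℂ} (hq : q.2 ≠ 0) : ∃ p, p.2 ≠ 0 ∧ radialMap G p = q := by
  obtain ⟨x, hx, hxq⟩ := hF.exists_add_angular_eq hq (area_pos hq) (area_nonneg q.1)
  refine ⟨(q.1, withArea x q.2), withArea_ne_zero hx hq, Prod.ext rfl ?_⟩
  rw [radialMap, polarCoords, hF.angular_withArea hx hq, area_withArea hx.le hq, hxq,
    withArea_withArea hx hq, withArea_area]

theorem hasFDerivAt_radialArea {p : ℂ × ℂ} (hp : p.2 ≠ 0) :
    HasFDerivAt (fun p => area p.2 + G (polarCoords p))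
      ((areaForm p.2).comp (ContinuousLinearMap.snd ℝ ℂ ℂ) +
        (fderiv ℝ G (polarCoords p)).comp (fderiv ℝ polarCoords p)) p :=
  ((hasFDerivAt_area p.2).comp p hasFDerivAt_snd).add
    (((hF.contDiffAt_angular hp).differentiableAt (by simp)).hasFDerivAt.comp p
      (hasFDerivAt_polarCoords p).differentiableAt.hasFDerivAt)

theorem fderiv_radialMap {p : ℂ × ℂ} (hp : p.2 ≠ 0) (h : ℂ × ℂ) : fderiv ℝ (radialMap G) p h =
    (h.1, fderiv ℝ (fun p => withArea (area p.2 + G (polarCoords p)) p.2) p h) := by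
  have hwith : DifferentiableAt ℝ
      (fun p : ℂ × ℂ => withArea (area p.2 + G (polarCoords p)) p.2) p :=
    (contDiffAt_snd.comp p (hF.contDiffAt_radialMap hp)).differentiableAt (by simp)
  have hD : HasFDerivAt (radialMap G) _ p := hasFDerivAt_fst.prodMk hwith.hasFDerivAt
  rw [hD.fderiv]
  rfl

theorem fderiv_radialMap_eq_zero {p h : ℂ × ℂ} (hp : p.2 ≠ 0)
    (hh : fderiv ℝ (radialMap G) p h = 0) : h = 0 := by
  rw [hF.fderiv_radialMap hp] at hh
  obtain ⟨hfst, hsnd⟩ := Prod.mk_eq_zero.1 hh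
  obtain ⟨harea, hangle⟩ := areaForm_angleForm_fderiv_withArea (hF.hasFDerivAt_radialArea hp)
    hasFDerivAt_snd (hF.area_add_angular_pos hp) hp h
  rw [hsnd, map_zero] at harea hangle
  simp only [add_apply, ContinuousLinearMap.comp_apply, ContinuousLinearMap.coe_snd',
    fderiv_polarCoords_apply, hfst, map_zero] at harea hangle
  have hradial : ((h.2, areaForm p.2 h.2, 0) : ℂ × ℝ × ℝ) =
      (p.2⁻¹ * h.2).re • (p.2, 0) + areaForm p.2 h.2 • (0, 1, 0) := by
    refine Prod.ext ?_ (by simp)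
    simpa [← hangle] using eq_angleForm_smul_add hp h.2
  have hzero : fderiv ℝ G (polarCoords p) (p.2, 0) = 0 := hF.fderiv_angular_radial hp
  rw [hradial, map_add, map_smul, map_smul, hzero, smul_zero, zero_add, smul_eq_mul,
    ← mul_one_add] at harea
  have hpos := hF.one_add_fderiv_angular_pos (q := polarCoords p) hp (area_pos hp) (area_nonneg _)
  exact Prod.ext hfst (eq_zero_of_areaForm_angleForm hp
    ((mul_eq_zero.1 harea.symm).resolve_right hpos.ne') hangle.symm)

theorem splitForm_fderiv_radialMap {p : ℂ × ℂ} (hp : p.2 ≠ 0) (h k : ℂ × ℂ) :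
    splitForm (fderiv ℝ (radialMap G) p h) (fderiv ℝ (radialMap G) p k) = splitForm h k +
      (fderiv ℝ G (polarCoords p) (fderiv ℝ polarCoords p h) * angleForm p.2 k.2 -
        angleForm p.2 h.2 * fderiv ℝ G (polarCoords p) (fderiv ℝ polarCoords p k)) := by
  rw [hF.fderiv_radialMap hp, hF.fderiv_radialMap hp, splitForm, splitForm,
    planarForm_fderiv_withArea (hF.hasFDerivAt_radialArea hp) hasFDerivAt_snd
      (hF.area_add_angular_pos hp) hp, planarForm_eq_areaForm_angleForm hp h.2]
  simp only [add_apply, ContinuousLinearMap.comp_apply, ContinuousLinearMap.coe_snd']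
  ring

theorem hasFDerivAt_fderiv_polarCoords {p : ℂ × ℂ} (hp : p.2 ≠ 0) (v : ℂ × ℝ × ℝ) :
    HasFDerivAt (fun p => fderiv ℝ F (polarCoords p) v)
      (((fderiv ℝ (fderiv ℝ F) (polarCoords p)).comp (fderiv ℝ polarCoords p)).flip v) p := by
  refine (((hF.hasFDerivAt_fderiv (q := polarCoords p) hp).comp p
    (hasFDerivAt_polarCoords p).differentiableAt.hasFDerivAt).clm_apply
      (hasFDerivAt_const v p)).congr_fderiv ?_
  ext h <;> simp

theorem splitForm_fderiv_rotationMap {p : ℂ × ℂ} (hp : p.2 ≠ 0) (h k : ℂ × ℂ) :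
    splitForm (fderiv ℝ (rotationMap F) p h) (fderiv ℝ (rotationMap F) p k) = splitForm h k +
      (areaForm p.1 h.1 *
          fderiv ℝ (fderiv ℝ F) (polarCoords p) (fderiv ℝ polarCoords p k) (0, 0, 1) -
        fderiv ℝ (fderiv ℝ F) (polarCoords p) (fderiv ℝ polarCoords p h) (0, 0, 1) *
          areaForm p.1 k.1) +
      (areaForm p.2 h.2 *
          fderiv ℝ (fderiv ℝ F) (polarCoords p) (fderiv ℝ polarCoords p k) (0, 1, 0) -
        fderiv ℝ (fderiv ℝ F) (polarCoords p) (fderiv ℝ polarCoords p h) (0, 1, 0) *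
          areaForm p.2 k.2) := by
  have hrot : ∀ v, HasFDerivAt (fun p => turn (fderiv ℝ F (polarCoords p) v)) _ p := fun v =>
    hasFDerivAt_turn_comp (hF.hasFDerivAt_fderiv_polarCoords hp v)
  have hD : HasFDerivAt (rotationMap F) _ p :=
    ((hrot (0, 0, 1)).mul hasFDerivAt_fst).differentiableAt.hasFDerivAt.prodMk
      ((hrot (0, 1, 0)).mul hasFDerivAt_snd).differentiableAt.hasFDerivAt
  rw [hD.fderiv, splitForm]
  refine (congrArg₂ (· + ·)
    (planarForm_fderiv_rotate (hrot (0, 0, 1)) (norm_turn _) hasFDerivAt_fst h k)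
    (planarForm_fderiv_rotate (hrot (0, 1, 0)) (norm_turn _) hasFDerivAt_snd h k)).trans ?_
  simp only [splitForm, ContinuousLinearMap.flip_apply, ContinuousLinearMap.comp_apply,
    ContinuousLinearMap.coe_fst', ContinuousLinearMap.coe_snd']
  ring

theorem splitForm_fderiv_radialMap_eq {p : ℂ × ℂ} (hp : p.2 ≠ 0) (h k : ℂ × ℂ) :
    splitForm (fderiv ℝ (radialMap G) p h) (fderiv ℝ (radialMap G) p k) =
      splitForm (fderiv ℝ (rotationMap F) p h) (fderiv ℝ (rotationMap F) p k) := by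
  have hwedge := hF.fderiv_angular_wedge (q := polarCoords p) hp (fderiv ℝ polarCoords p h)
    (fderiv ℝ polarCoords p k)
  rw [hF.splitForm_fderiv_radialMap hp, hF.splitForm_fderiv_rotationMap hp]
  simp only [fderiv_polarCoords_apply, polarCoords] at hwedge ⊢
  linear_combination hwedge

theorem contDiffAt_rotationMap {p : ℂ × ℂ} (hp : p.2 ≠ 0) :
    ContDiffAt ℝ ∞ (rotationMap F) p := by
  have hD : ∀ v, ContDiffAt ℝ ∞ (fun p => turn (fderiv ℝ F (polarCoords p) v)) p := fun v =>
    contDiff_turn.contDiffAt.comp p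
      (((hF.contDiffAt_fderiv hp).comp p contDiff_polarCoords.contDiffAt).clm_apply
        contDiffAt_const)
  exact ((hD _).mul contDiffAt_fst).prodMk ((hD _).mul contDiffAt_snd)

theorem hasDerivAt_rotationLift (x N t : ℝ) :
    HasDerivAt (rotationLift F x N) (1 + fderiv ℝ G (turn t, x, N) (0, 1, 0)) t := by
  have hcurve : HasDerivAt (fun t => (turn t, x, N))
      (2 * Real.pi * Complex.I * turn t, (0 : ℝ × ℝ)) t :=
    (hasDerivAt_turn t).prodMk (hasDerivAt_const _ _)
  have hD := (HasFDerivAt.comp_hasDerivAt (f := fun t => (turn t, x, N)) t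
    (hF.hasFDerivAt_fderiv (q := (turn t, x, N)) (turn_ne_zero t)) hcurve).clm_apply
    (hasDerivAt_const t ((0, 1, 0) : ℂ × ℝ × ℝ))
  refine ((hasDerivAt_id t).add hD).congr_deriv ?_
  rw [hF.fderiv_angular (turn_ne_zero t), hF.fderiv_fderiv_comm (turn_ne_zero t)]
  simp

theorem strictMono_rotationLift {x N : ℝ} (hx : 0 < x) (hN : 0 ≤ N) :
    StrictMono (rotationLift F x N) :=
  strictMono_of_deriv_pos fun t => by
    rw [(hF.hasDerivAt_rotationLift x N t).deriv]
    exact hF.one_add_fderiv_angular_pos (turn_ne_zero t) hx hN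

theorem surjective_rotationLift {x N : ℝ} (hx : 0 < x) (hN : 0 ≤ N) :
    Function.Surjective (rotationLift F x N) := by
  let f : CircleDeg1Lift := ⟨⟨rotationLift F x N, (hF.strictMono_rotationLift hx hN).monotone⟩,
    fun t => by simpa using rotationLift_add_int F x N t 1⟩
  exact f.continuous_iff_surjective.1 <| continuous_iff_continuousAt.2 fun t =>
    (hF.hasDerivAt_rotationLift x N t).continuousAt

theorem rotationMap_snd_eq {p : ℂ × ℂ} {r t : ℝ} (hr : 0 < r) (hp : p.2 = r * turn t) :
    (rotationMap F p).2 = r * turn (rotationLift F (area p.2) (area p.1) t) := by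
  have h := hF.fderiv_real_mul hr (turn_ne_zero t) (area p.2, area p.1) 0 (1, 0)
  rw [mul_zero, ← hp] at h
  rw [rotationMap, polarCoords, rotationLift, h, turn_add, hp]
  ring

theorem injOn_rotationMap : InjOn (rotationMap F) {p | p.2 ≠ 0} := by
  rintro ⟨z, η⟩ hp ⟨w, ζ⟩ - h
  have hz : area z = area w := by
    rw [← area_rotationMap_fst F (z, η), h, area_rotationMap_fst]
  have hη : area η = area ζ := by
    rw [← area_rotationMap_snd F (z, η), h, area_rotationMap_snd]
  have hr : 0 < ‖η‖ := norm_pos_iff.2 hp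
  obtain ⟨t, ht⟩ := exists_eq_norm_mul_turn η
  obtain ⟨u, hu⟩ := exists_eq_norm_mul_turn ζ
  rw [← norm_eq_of_area_eq hη] at hu
  have hsnd := (Prod.ext_iff.1 h).2
  rw [hF.rotationMap_snd_eq hr ht, hF.rotationMap_snd_eq hr hu] at hsnd
  have hlift : turn (rotationLift F (area η) (area z) t) =
      turn (rotationLift F (area η) (area z) u) := by
    simpa only [← hz, ← hη] using mul_left_cancel₀ (by exact_mod_cast hr.ne') hsnd
  obtain ⟨k, hk⟩ := exists_int_of_turn_eq hlift
  rw [← rotationLift_add_int] at hk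
  have htu := (hF.strictMono_rotationLift (area_pos hp) (area_nonneg z)).injective hk
  have hηζ : η = ζ := by rw [ht, hu, htu, turn_add, turn_intCast, mul_one]
  subst hηζ
  have hfst := (Prod.ext_iff.1 h).1
  simp only [rotationMap, polarCoords, hz] at hfst
  rw [mul_left_cancel₀ (turn_ne_zero _) hfst]

theorem exists_rotationMap_eq {q : ℂ × ℂ} (hq : q.2 ≠ 0) :
    ∃ p, p.2 ≠ 0 ∧ rotationMap F p = q := by
  obtain ⟨u, hu⟩ := exists_eq_norm_mul_turn q.2
  have hr : 0 < ‖q.2‖ := norm_pos_iff.2 hq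
  obtain ⟨t, ht⟩ := hF.surjective_rotationLift (area_pos hq) (area_nonneg q.1) u
  set η : ℂ := ‖q.2‖ * turn t
  have hη : area η = area q.2 := by
    rw [area_eq_norm, area_eq_norm, norm_mul, norm_turn, mul_one, Complex.norm_real, norm_norm]
  set s := fderiv ℝ F (η, area q.2, area q.1) (0, 0, 1)
  have hz : area (turn (-s) * q.1) = area q.1 := area_mul_of_norm_eq_one (norm_turn _) _
  refine ⟨(turn (-s) * q.1, η), mul_ne_zero (by exact_mod_cast hr.ne') (turn_ne_zero t),
    Prod.ext ?_ ?_⟩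
  · rw [rotationMap, polarCoords, hη, hz, ← mul_assoc, ← turn_add, add_neg_cancel, turn_zero,
      one_mul]
  · rw [hF.rotationMap_snd_eq hr rfl, hη, hz, ht, ← hu]

theorem eventuallyEq_id {p : ℂ × ℂ} (hFp : ∀ᶠ q in 𝓝 (polarCoords p), F q = 0) :
    radialMap G =ᶠ[𝓝 p] id ∧ rotationMap F =ᶠ[𝓝 p] id := by
  refine eventually_and.1 ?_
  filter_upwards [contDiff_polarCoords.continuous.continuousAt.eventually
    hFp.eventually_nhds] with q (hq : F =ᶠ[𝓝 (polarCoords q)] fun _ => 0)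
  have hD : fderiv ℝ F (polarCoords q) = 0 := by rw [hq.fderiv_eq, fderiv_const_apply]
  refine ⟨Prod.ext rfl ?_, by simp [rotationMap, hD, turn_zero]⟩
  rcases eq_or_ne q.2 0 with h0 | h0
  · simp [radialMap, h0, withArea]
  · rw [radialMap, id, ← hF.angular (polarCoords q) h0, hD, zero_apply, add_zero, withArea_area]

/-- The areas involved in the relation that a polar generator `F` with angular derivative `G`
defines between `a` (the image of `radialMap G`) and `b` (the image of `rotationMap F`). -/
def Relates (G : ℂ × ℝ × ℝ → ℝ) (a b : ℂ × ℂ) : Prop :=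
  area b.1 = area a.1 ∧ area a.2 = area b.2 + G (a.2, area b.2, area a.1)

omit hF in
theorem relates_refl (z : ℂ × ℂ) (hz : G (z.2, area z.2, area z.1) = 0) : Relates G z z :=
  ⟨rfl, by rw [hz, add_zero]⟩

theorem relates_radialMap_rotationMap {p : ℂ × ℂ} (hp : p.2 ≠ 0) :
    Relates G (radialMap G p) (rotationMap F p) := by
  refine ⟨area_rotationMap_fst F p, ?_⟩
  rw [area_rotationMap_snd, hF.area_radialMap_snd hp]
  rfl

theorem bijOn_radialMap : BijOn (radialMap G) {p | p.2 ≠ 0} {p | p.2 ≠ 0} :=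
  ⟨fun _ => hF.radialMap_snd_ne_zero, hF.injOn_radialMap, fun _ => hF.exists_radialMap_eq⟩

theorem bijOn_rotationMap : BijOn (rotationMap F) {p | p.2 ≠ 0} {p | p.2 ≠ 0} :=
  ⟨fun _ hp => mul_ne_zero (turn_ne_zero _) hp, hF.injOn_rotationMap,
    fun _ => hF.exists_rotationMap_eq⟩

theorem fderiv_and_relates_of_flat {p : ℂ × ℂ}
    (hp : p.2 = 0 → ∀ᶠ q in 𝓝 (polarCoords p), F q = 0) :
    (∀ h, fderiv ℝ (radialMap G) p h = 0 → h = 0) ∧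
      (∀ h k, splitForm (fderiv ℝ (radialMap G) p h) (fderiv ℝ (radialMap G) p k) =
        splitForm (fderiv ℝ (rotationMap F) p h) (fderiv ℝ (rotationMap F) p k)) ∧
      Relates G (radialMap G p) (rotationMap F p) := by
  by_cases hp0 : p.2 = 0
  · obtain ⟨hA, hB⟩ := hF.eventuallyEq_id (hp hp0)
    rw [hA.fderiv_eq, hB.fderiv_eq, hA.self_of_nhds, hB.self_of_nhds, fderiv_id]
    exact ⟨fun _ => id, fun _ _ => rfl, relates_refl _ (by
      rw [id, hp0, area_zero, hF.angular_zero _ _ (area_nonneg _)])⟩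
  · exact ⟨fun _ => hF.fderiv_radialMap_eq_zero hp0, hF.splitForm_fderiv_radialMap_eq hp0,
      hF.relates_radialMap_rotationMap hp0⟩

theorem embedsWith_relates_and_symm {M : Set (ℂ × ℂ)} (hM : IsOpen M) (hne : {p | p.2 ≠ 0} ⊆ M)
    (hflat : ∀ p ∈ M, p.2 = 0 → ∀ᶠ q in 𝓝 (polarCoords p), F q = 0) :
    EmbedsWith splitForm M (fun a b => b ∈ M ∧ Relates G a b) ∧
      EmbedsWith splitForm M (fun b a => a ∈ M ∧ Relates G a b) := by
  have hid := fun p hp hp0 => hF.eventuallyEq_id (hflat p hp (not_not.1 hp0))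
  have hA : ContDiffOn ℝ ∞ (radialMap G) M := contDiffOn_of_eventuallyEq_id
    (fun _ => hF.contDiffAt_radialMap) fun p hp hp0 => (hid p hp hp0).1
  have hB : ContDiffOn ℝ ∞ (rotationMap F) M := contDiffOn_of_eventuallyEq_id
    (fun _ => hF.contDiffAt_rotationMap) fun p hp hp0 => (hid p hp hp0).2
  have hAbij : BijOn (radialMap G) M M := bijOn_of_eq_self hF.bijOn_radialMap hne
    fun p hp hp0 => (hid p hp hp0).1.self_of_nhds
  have hBbij : BijOn (rotationMap F) M M := bijOn_of_eq_self hF.bijOn_rotationMap hne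
    fun p hp hp0 => (hid p hp hp0).2.self_of_nhds
  choose hker hσ hrel using fun m hm => hF.fderiv_and_relates_of_flat (hflat m hm)
  constructor
  · refine (EmbedsWith.of_parametrizations hM hA hB hAbij.injOn hBbij.injOn hker hσ).mono
      hAbij.image_eq.ge ?_
    rintro _ - _ ⟨m, hm, rfl, rfl⟩
    exact ⟨hBbij.mapsTo hm, hrel m hm⟩
  · refine (EmbedsWith.of_parametrizations hM hB hA hBbij.injOn hAbij.injOn
      (fun m hm _ => fderiv_ker_eq_bot_of_splitForm_eq (hker m hm) (hσ m hm))
      fun m hm h k => (hσ m hm h k).symm).mono hBbij.image_eq.ge ?_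
    rintro _ - _ ⟨m, hm, rfl, rfl⟩
    exact ⟨hAbij.mapsTo hm, hrel m hm⟩

end IsPolarGenerator
end PolarGenerators

/-! ### Elementary embeddings -/

section ExplicitEmbeddings

/-- The unit vector in the direction of `w`, which is `0` for `w = 0`. -/
def phase (w : ℂ) : ℂ := withArea Real.pi w

theorem phase_ne_zero {w : ℂ} (hw : w ≠ 0) : phase w ≠ 0 := withArea_ne_zero Real.pi_pos hw

theorem area_phase {w : ℂ} (hw : w ≠ 0) : area (phase w) = Real.pi :=
  area_withArea Real.pi_pos.le hw

theorem norm_phase {w : ℂ} (hw : w ≠ 0) : ‖phase w‖ = 1 := by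
  have harea := area_phase hw
  rw [area_eq_norm, mul_eq_left₀ Real.pi_ne_zero] at harea
  exact (pow_eq_one_iff_of_nonneg (norm_nonneg _) two_ne_zero).1 harea

theorem contDiffAt_phase {w : ℂ} (hw : w ≠ 0) : ContDiffAt ℝ ∞ phase w :=
  contDiffAt_withArea contDiffAt_const contDiffAt_id Real.pi_pos hw

theorem hasFDerivAt_phase_zpow {w : ℂ} (hw : w ≠ 0) (k : ℤ) :
    HasFDerivAt (fun w => phase w ^ k)
      (((k : ℝ) • angleForm w).smulRight (2 * Real.pi * Complex.I * phase w ^ k)) w := by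
  have hphase : phase w ≠ 0 := phase_ne_zero hw
  have hD := ((contDiffAt_phase hw).differentiableAt (by simp)).hasFDerivAt
  refine ((hasDerivAt_zpow k _ (Or.inl hphase)).hasFDerivAt.restrictScalars ℝ |>.comp w
    hD).congr_fderiv ?_
  ext1 h
  obtain ⟨harea, hangle⟩ : areaForm (phase w) (fderiv ℝ phase w h) = 0 ∧
      angleForm (phase w) (fderiv ℝ phase w h) = angleForm w h :=
    areaForm_angleForm_fderiv_withArea (hasFDerivAt_const Real.pi w) (hasFDerivAt_id w)
      Real.pi_pos hw h
  have hre : ((phase w)⁻¹ * fderiv ℝ phase w h).re = 0 := by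
    rw [areaForm_eq_re hphase, area_phase hw] at harea
    exact (mul_eq_zero.1 harea).resolve_left (by positivity)
  have hdir := eq_angleForm_smul_add hphase (fderiv ℝ phase w h)
  rw [hre, zero_smul, add_zero, hangle] at hdir
  simp only [ContinuousLinearMap.comp_apply, ContinuousLinearMap.smulRight_apply, hdir]
  simp [zpow_sub_one₀ hphase]
  field_simp

/-- Adds `k * area p.2 + K` to the area of the first coordinate, rotating the second coordinate
to compensate. -/
def shear (k : ℤ) (K : ℝ) (p : ℂ × ℂ) : ℂ × ℂ :=
  (withArea (area p.1 + k * area p.2 + K) p.1, phase p.1 ^ (-k) * p.2)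

variable {k : ℤ} {K : ℝ} {p : ℂ × ℂ}

theorem area_shear_snd (hp : p.1 ≠ 0) : area (shear k K p).2 = area p.2 :=
  area_mul_of_norm_eq_one (by rw [norm_zpow, norm_phase hp, one_zpow]) _

theorem contDiffAt_shear (hp : p.1 ≠ 0) (hpos : 0 < area p.1 + k * area p.2 + K) :
    ContDiffAt ℝ ∞ (shear k K) p := by
  have hu : ContDiffAt ℝ ∞ (fun p : ℂ × ℂ => area p.1 + k * area p.2 + K) p :=
    (((contDiff_area.comp contDiff_fst).add
      (contDiff_const.mul (contDiff_area.comp contDiff_snd))).add contDiff_const).contDiffAt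
  have hzpow : ContDiffAt ℝ ∞ (fun w : ℂ => w ^ (-k)) (phase p.1) :=
    ((analyticAt_id (𝕜 := ℂ)).zpow (phase_ne_zero hp)).contDiffAt.restrict_scalars ℝ
  have hpow : ContDiffAt ℝ ∞ (fun p : ℂ × ℂ => phase p.1 ^ (-k)) p :=
    (hzpow.comp p.1 (contDiffAt_phase hp)).comp (f := Prod.fst) p contDiffAt_fst
  exact (contDiffAt_withArea hu contDiffAt_fst hpos hp).prodMk (hpow.mul contDiffAt_snd)

theorem injOn_shear :
    InjOn (shear k K) {p | p.1 ≠ 0 ∧ 0 < area p.1 + k * area p.2 + K} := by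
  rintro p ⟨hp, hp'⟩ q ⟨hq, hq'⟩ h
  have harea₂ : area p.2 = area q.2 := by rw [← area_shear_snd hp, h, area_shear_snd hq]
  have hfst : withArea _ p.1 = withArea _ q.1 := (Prod.ext_iff.1 h).1
  have harea₁ : area p.1 = area q.1 := by
    have := congrArg area hfst
    rw [area_withArea hp'.le hp, area_withArea hq'.le hq, harea₂] at this
    linarith
  have h₁ : p.1 = q.1 := by
    rw [← withArea_area p.1, ← withArea_withArea hp' hp, hfst, withArea_withArea hq' hq, harea₁,
      withArea_area]
  have hsnd : phase p.1 ^ (-k) * p.2 = phase q.1 ^ (-k) * q.2 :=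
    (Prod.ext_iff.1 h).2
  rw [h₁] at hsnd
  exact Prod.ext h₁
    (mul_left_cancel₀ (zpow_ne_zero _ (phase_ne_zero hq)) hsnd)

theorem splitForm_fderiv_shear (hp : p.1 ≠ 0) (hpos : 0 < area p.1 + k * area p.2 + K)
    (h h' : ℂ × ℂ) :
    splitForm (fderiv ℝ (shear k K) p h) (fderiv ℝ (shear k K) p h') = splitForm h h' := by
  have hu : HasFDerivAt (fun p : ℂ × ℂ => area p.1 + k * area p.2 + K)
      ((areaForm p.1).comp (ContinuousLinearMap.fst ℝ ℂ ℂ) +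
        (k : ℝ) • (areaForm p.2).comp (ContinuousLinearMap.snd ℝ ℂ ℂ)) p :=
    (((hasFDerivAt_area p.1).comp p hasFDerivAt_fst).add
      (((hasFDerivAt_area p.2).comp p hasFDerivAt_snd).const_mul _)).add_const K
  have he : HasFDerivAt (fun p : ℂ × ℂ => phase p.1 ^ (-k))
      ((((-k : ℤ) : ℝ) • (angleForm p.1).comp (ContinuousLinearMap.fst ℝ ℂ ℂ)).smulRight
        (2 * Real.pi * Complex.I * phase p.1 ^ (-k))) p :=
    (hasFDerivAt_phase_zpow hp (-k)).comp p hasFDerivAt_fst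
  have hwith := (contDiffAt_fst.comp p (contDiffAt_shear hp hpos)).differentiableAt (by simp)
  have hD : HasFDerivAt (shear k K) _ p := hwith.hasFDerivAt.prodMk
    (he.mul hasFDerivAt_snd).differentiableAt.hasFDerivAt
  rw [hD.fderiv, splitForm]
  refine (congrArg₂ (· + ·) (planarForm_fderiv_withArea hu hasFDerivAt_fst hpos hp h h')
    (planarForm_fderiv_rotate he (by rw [norm_zpow, norm_phase hp, one_zpow]) hasFDerivAt_snd
      h h')).trans ?_
  rw [splitForm, planarForm_eq_areaForm_angleForm hp h.1]
  simp only [add_apply, smul_apply, ContinuousLinearMap.comp_apply, ContinuousLinearMap.coe_fst',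
    ContinuousLinearMap.coe_snd', smul_eq_mul, Int.cast_neg]
  ring

theorem embedsWith_shear (k : ℤ) (K : ℝ) :
    EmbedsWith splitForm {p | p.1 ≠ 0 ∧ 0 < area p.1 + k * area p.2 + K}
      (fun p q => area q.1 = area p.1 + k * area p.2 + K ∧ area q.2 = area p.2) :=
  ⟨shear k K, fun _ hp => (contDiffAt_shear hp.1 hp.2).contDiffWithinAt, injOn_shear,
    fun _ hp => ⟨area_withArea hp.2.le hp.1, area_shear_snd hp.1⟩,
    fun _ hp => splitForm_fderiv_shear hp.1 hp.2⟩

theorem embedsWith_sub_const {E : Type*} [NormedAddCommGroup E] [NormedSpace ℝ E]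
    (σ : E → E → ℝ) (U : Set E) (d : E) : EmbedsWith σ U (fun x y => y = x - d) :=
  ⟨fun x => x - d, (contDiff_id.sub contDiff_const).contDiffOn, (sub_left_injective).injOn,
    fun _ _ => rfl, fun x _ h k => by rw [fderiv_sub_const, fderiv_fun_id]; rfl⟩

end ExplicitEmbeddings

section CoordinateEmbeddings

theorem EmbedsWith.slice {M : Set (ℂ × ℂ)} {R : ℂ × ℂ → ℂ × ℂ → Prop} (hM : IsOpen M)
    (h : EmbedsWith splitForm M R) (hR : ∀ η q, R (0, η) q → q.1 = 0) :
    EmbedsWith planarForm {η | (0, η) ∈ M} (fun η ζ => R (0, η) (0, ζ)) := by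
  obtain ⟨f, hf, hinj, hfR, hσ⟩ := h
  have hfst : ∀ η, (0, η) ∈ M → (f (0, η)).1 = 0 := fun η hη => hR η _ (hfR _ hη)
  have hpair : ∀ η, (0, η) ∈ M → (0, (f (0, η)).2) = f (0, η) := fun η hη =>
    Prod.ext (hfst η hη).symm rfl
  have hcont : Continuous fun η : ℂ => ((0 : ℂ), η) := by fun_prop
  refine ⟨fun η => (f (0, η)).2, ?_, ?_, fun η hη => ?_, fun η hη h k => ?_⟩
  · exact contDiff_snd.comp_contDiffOn
      (hf.comp (contDiff_const.prodMk contDiff_id).contDiffOn fun _ => id)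
  · intro η hη ζ hζ heq
    refine (Prod.ext_iff.1 (hinj hη hζ ?_)).2
    rw [← hpair η hη, ← hpair ζ hζ]
    exact congrArg (Prod.mk 0) heq
  · simp only [hpair η hη]
    exact hfR _ hη
  · have hD := ((hf.contDiffAt (hM.mem_nhds hη)).differentiableAt (by simp)).hasFDerivAt.comp η
      (hasFDerivAt_prodMk_right (𝕜 := ℝ) (0 : ℂ) η)
    have hzero : (fun η => (f (0, η)).1) =ᶠ[𝓝 η] fun _ => 0 := by
      filter_upwards [hcont.continuousAt.preimage_mem_nhds (hM.mem_nhds hη)] with ζ hζ using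
        hfst ζ hζ
    have hD₁ : ∀ h, (fderiv ℝ f (0, η) (0, h)).1 = 0 := fun h =>
      DFunLike.congr_fun (hD.fst.unique ((hasFDerivAt_const 0 η).congr_of_eventuallyEq hzero)) h
    have hσ' := hσ _ hη (0, h) (0, k)
    rw [splitForm, splitForm, hD₁, hD₁] at hσ'
    have hD₂ : ∀ h, fderiv ℝ (fun η => (f (0, η)).2) η h = (fderiv ℝ f (0, η) (0, h)).2 :=
      fun h => DFunLike.congr_fun hD.snd.fderiv h
    simpa [hD₂, planarForm] using hσ'

/-- Applies a map of `ℂ × ℂ` to the coordinates `i` and `j`. -/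
def onPair {n : ℕ} (i j : Fin n) (f : ℂ × ℂ → ℂ × ℂ) (z : Fin n → ℂ) : Fin n → ℂ :=
  Function.update (Function.update z i (f (z i, z j)).1) j (f (z i, z j)).2

variable {n : ℕ} {i j : Fin n} {f : ℂ × ℂ → ℂ × ℂ} {z : Fin n → ℂ}

theorem onPair_right : onPair i j f z j = (f (z i, z j)).2 := Function.update_self ..

theorem onPair_left (hij : i ≠ j) : onPair i j f z i = (f (z i, z j)).1 := by
  rw [onPair, Function.update_of_ne hij, Function.update_self]

theorem onPair_of_ne {l : Fin n} (hi : l ≠ i) (hj : l ≠ j) : onPair i j f z l = z l := by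
  rw [onPair, Function.update_of_ne hj, Function.update_of_ne hi]

theorem stdSymplecticForm_eq_splitForm_add (hij : i ≠ j) (u v : Fin n → ℂ) :
    stdSymplecticForm n u v = splitForm (u i, u j) (v i, v j) +
      ∑ l ∈ (Finset.univ.erase i).erase j, planarForm (u l) (v l) := by
  rw [splitForm, add_assoc, Finset.add_sum_erase _ (fun l => planarForm (u l) (v l))
    (Finset.mem_erase.2 ⟨hij.symm, Finset.mem_univ j⟩),
    Finset.add_sum_erase _ (fun l => planarForm (u l) (v l)) (Finset.mem_univ i)]
  rfl

theorem contDiffAt_onPair (hij : i ≠ j) (hf : ContDiffAt ℝ ∞ f (z i, z j)) :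
    ContDiffAt ℝ ∞ (onPair i j f) z := by
  have hpair : ContDiffAt ℝ ∞ (fun z : Fin n → ℂ => f (z i, z j)) z :=
    hf.comp z ((contDiffAt_apply ℝ ℂ i z).prodMk (contDiffAt_apply ℝ ℂ j z))
  refine contDiffAt_pi.2 fun l => ?_
  by_cases hj : l = j
  · subst hj
    simpa only [onPair_right] using hpair.snd
  by_cases hi : l = i
  · subst hi
    simpa only [onPair_left hij] using hpair.fst
  · simpa only [onPair_of_ne hi hj] using contDiffAt_apply ℝ ℂ l z

theorem fderiv_onPair (hij : i ≠ j) (hf : ContDiffAt ℝ ∞ f (z i, z j)) (h : Fin n → ℂ) :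
    fderiv ℝ (onPair i j f) z h = onPair i j (fderiv ℝ f (z i, z j)) h := by
  have hpair : HasFDerivAt (fun z : Fin n → ℂ => f (z i, z j)) _ z :=
    (hf.differentiableAt (by simp)).hasFDerivAt.comp z
      ((hasFDerivAt_apply i z).prodMk (hasFDerivAt_apply j z))
  have hdiff := (contDiffAt_onPair hij hf).differentiableAt (by simp)
  funext l
  have happly : fderiv ℝ (fun z => onPair i j f z l) z h = fderiv ℝ (onPair i j f) z h l :=
    DFunLike.congr_fun (hasFDerivAt_pi'.1 hdiff.hasFDerivAt l).fderiv h
  rw [← happly]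
  by_cases hj : l = j
  · subst hj
    simp only [onPair_right, hpair.snd.fderiv]
    rfl
  by_cases hi : l = i
  · subst hi
    simp only [onPair_left hij, hpair.fst.fderiv]
    rfl
  · simp only [onPair_of_ne hi hj, (hasFDerivAt_apply l z).fderiv]
    rfl

theorem EmbedsWith.onPair (hij : i ≠ j) {V : Set (ℂ × ℂ)} (hV : IsOpen V)
    {R : ℂ × ℂ → ℂ × ℂ → Prop} (h : EmbedsWith splitForm V R) :
    EmbedsWith (stdSymplecticForm n) {z | (z i, z j) ∈ V}
      (fun z w => R (z i, z j) (w i, w j) ∧ ∀ l, l ≠ i → l ≠ j → w l = z l) := by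
  obtain ⟨f, hf, hinj, hfR, hσ⟩ := h
  have hfz : ∀ z : Fin n → ℂ, (z i, z j) ∈ V → ContDiffAt ℝ ∞ f (z i, z j) :=
    fun z hz => hf.contDiffAt (hV.mem_nhds hz)
  refine ⟨_root_.onPair i j f, fun z hz => (contDiffAt_onPair hij (hfz z hz)).contDiffWithinAt,
    fun z hz w hw heq => ?_, fun z hz => ⟨?_, fun l hi hj => onPair_of_ne hi hj⟩,
    fun z hz h k => ?_⟩
  · have hpair : (z i, z j) = (w i, w j) := hinj hz hw <| Prod.ext
      (by rw [← onPair_left hij, heq, onPair_left hij]) (by rw [← onPair_right, heq, onPair_right])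
    funext l
    by_cases hj : l = j
    · exact hj ▸ (Prod.ext_iff.1 hpair).2
    by_cases hi : l = i
    · exact hi ▸ (Prod.ext_iff.1 hpair).1
    · rw [← onPair_of_ne (f := f) (z := z) hi hj, heq, onPair_of_ne hi hj]
  · rw [onPair_left hij, onPair_right]
    exact hfR _ hz
  · rw [stdSymplecticForm_eq_splitForm_add hij, stdSymplecticForm_eq_splitForm_add hij,
      fderiv_onPair hij (hfz z hz), fderiv_onPair hij (hfz z hz), onPair_left hij, onPair_right,
      onPair_left hij, onPair_right, hσ _ hz]
    refine congrArg _ (Finset.sum_congr rfl fun l hl => ?_)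
    obtain ⟨hj, hi, -⟩ := by simpa only [Finset.mem_erase] using hl
    rw [onPair_of_ne hi hj, onPair_of_ne hi hj]

theorem EmbedsWith.pi {V : Set ℂ} (hV : IsOpen V) {R : ℂ → ℂ → Prop}
    (h : EmbedsWith planarForm V R) (n : ℕ) :
    EmbedsWith (stdSymplecticForm n) {z | ∀ i, z i ∈ V} (fun z w => ∀ i, R (z i) (w i)) := by
  obtain ⟨f, hf, hinj, hfR, hσ⟩ := h
  have hfz : ∀ ζ ∈ V, ContDiffAt ℝ ∞ f ζ := fun ζ hζ => hf.contDiffAt (hV.mem_nhds hζ)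
  refine ⟨fun z i => f (z i), fun z hz => ?_, fun z hz w hw heq => ?_,
    fun z hz i => hfR _ (hz i), fun z hz h k => Finset.sum_congr rfl fun i _ => ?_⟩
  · exact (contDiffAt_pi.2 fun i =>
      (hfz _ (hz i)).comp z (contDiffAt_apply ℝ ℂ i z)).contDiffWithinAt
  · exact funext fun i => hinj (hz i) (hw i) (congrFun heq i)
  · have hD : HasFDerivAt (fun (z : Fin n → ℂ) i => f (z i)) _ z := hasFDerivAt_pi.2 fun i =>
      ((hfz _ (hz i)).differentiableAt (by simp)).hasFDerivAt.comp z (hasFDerivAt_apply i z)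
    rw [hD.fderiv]
    exact hσ _ (hz i) (h i) (k i)

theorem EmbedsWith.symplecticEmbeds {U V W : Set (Fin n → ℂ)} (hW : IsOpen W)
    {R : (Fin n → ℂ) → (Fin n → ℂ) → Prop} (h : EmbedsWith (stdSymplecticForm n) W R)
    (hUW : U ⊆ W) (hU : UniqueDiffOn ℝ U) (hV : ∀ z ∈ U, ∀ w, R z w → w ∈ V) :
    SymplecticEmbeds n U V := by
  obtain ⟨f, hf, hinj, hR, hσ⟩ := h
  refine ⟨f, hf.mono hUW, hinj.mono hUW, fun z hz => hV z hz _ (hR z (hUW hz)),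
    fun z hz u v => ?_⟩
  have hfz : DifferentiableAt ℝ f z :=
    (hf.contDiffAt (hW.mem_nhds (hUW hz))).differentiableAt (by simp)
  rw [hfz.fderivWithin (hU z hz), hσ z (hUW hz)]

end CoordinateEmbeddings

section Ramp

/-- A smooth approximation of `max y 0`: it vanishes for `y ≤ 0` and has slope `1` for `l ≤ y`. -/
def ramp (l y : ℝ) : ℝ := ∫ t in (0 : ℝ)..y, Real.smoothTransition (t / l)

variable {l x y : ℝ}

theorem continuous_smoothTransition_div (l : ℝ) :
    Continuous fun t : ℝ => Real.smoothTransition (t / l) :=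
  Real.smoothTransition.continuous.comp (continuous_id.div_const l)

theorem contDiff_ramp (l : ℝ) : ContDiff ℝ ∞ (ramp l) := by
  have hderiv : ∀ y, HasDerivAt (ramp l) (Real.smoothTransition (y / l)) y := fun y =>
    ((continuous_smoothTransition_div l).integral_hasStrictDerivAt 0 y).hasDerivAt
  refine contDiff_infty_iff_deriv.2 ⟨fun y => (hderiv y).differentiableAt, ?_⟩
  rw [funext fun y => (hderiv y).deriv]
  exact Real.smoothTransition.contDiff.comp (contDiff_id.div_const l)

theorem ramp_sub_ramp (l x y : ℝ) :
    ramp l y - ramp l x = ∫ t in x..y, Real.smoothTransition (t / l) :=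
  intervalIntegral.integral_interval_sub_left
    ((continuous_smoothTransition_div l).intervalIntegrable _ _)
    ((continuous_smoothTransition_div l).intervalIntegrable _ _)

theorem monotone_ramp (l : ℝ) : Monotone (ramp l) := fun x y hxy => by
  rw [← sub_nonneg, ramp_sub_ramp]
  exact intervalIntegral.integral_nonneg hxy fun t _ => Real.smoothTransition.nonneg _

theorem ramp_sub_ramp_le (l : ℝ) (hxy : x ≤ y) : ramp l y - ramp l x ≤ y - x := by
  rw [ramp_sub_ramp, ← integral_one]
  exact intervalIntegral.integral_mono_on hxy
    ((continuous_smoothTransition_div l).intervalIntegrable _ _) intervalIntegrable_const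
    fun t _ => Real.smoothTransition.le_one _

theorem ramp_of_nonpos (hl : 0 < l) (hy : y ≤ 0) : ramp l y = 0 := by
  refine (intervalIntegral.integral_congr fun t ht => ?_).trans intervalIntegral.integral_zero
  rw [uIcc_of_ge hy] at ht
  exact Real.smoothTransition.zero_of_nonpos (div_nonpos_of_nonpos_of_nonneg ht.2 hl.le)

theorem ramp_nonneg (hl : 0 < l) (y : ℝ) : 0 ≤ ramp l y := by
  rcases le_total y 0 with hy | hy
  · exact (ramp_of_nonpos hl hy).ge
  · exact (ramp_of_nonpos hl le_rfl).symm.trans_le (monotone_ramp l hy)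

theorem ramp_le (hl : 0 < l) (hy : 0 ≤ y) : ramp l y ≤ y := by
  simpa [ramp_of_nonpos hl le_rfl] using ramp_sub_ramp_le l hy

theorem sub_le_ramp (hl : 0 < l) (y : ℝ) : y - l ≤ ramp l y := by
  rcases le_total y l with hy | hy
  · exact (sub_nonpos.2 hy).trans (ramp_nonneg hl y)
  · have hslope : ramp l y - ramp l l = y - l := by
      rw [ramp_sub_ramp, ← integral_one]
      refine intervalIntegral.integral_congr fun t ht => ?_
      rw [uIcc_of_le hy] at ht
      exact Real.smoothTransition.one_of_one_le ((one_le_div hl).2 ht.1)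
    linarith [ramp_nonneg hl l]

end Ramp

/-! ### The cardioid and the spike -/

section AngularKernels

theorem phase_eq (η : ℂ) : phase η = (‖η‖⁻¹ : ℝ) * η := by
  rw [phase, withArea, area_eq_norm, ← div_div, div_self Real.pi_ne_zero, one_div,
    Real.sqrt_inv, Real.sqrt_sq (norm_nonneg η)]

theorem phase_real_mul {r : ℝ} (hr : 0 < r) (η : ℂ) : phase (r * η) = phase η := by
  rw [phase_eq, phase_eq, norm_mul, Complex.norm_of_nonneg hr.le, mul_inv, ← mul_assoc,
    ← Complex.ofReal_mul]
  congr 2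
  field_simp

theorem norm_mul_phase (η : ℂ) : ‖η‖ * phase η = η := by
  rcases eq_or_ne η 0 with rfl | hη
  · simp
  · rw [phase_eq, Complex.ofReal_inv,
      mul_inv_cancel_left₀ (Complex.ofReal_ne_zero.2 (norm_ne_zero_iff.2 hη))]

theorem norm_phase_le_one (η : ℂ) : ‖phase η‖ ≤ 1 := by
  rcases eq_or_ne η 0 with rfl | hη
  · simp [phase_eq]
  · exact (norm_phase hη).le

theorem abs_phase_re_le_one (η : ℂ) : |(phase η).re| ≤ 1 :=
  (Complex.abs_re_le_norm _).trans (norm_phase_le_one η)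

theorem neg_one_le_phase_re (η : ℂ) : -1 ≤ (phase η).re := (abs_le.1 (abs_phase_re_le_one η)).1

theorem phase_re_le_one (η : ℂ) : (phase η).re ≤ 1 := (abs_le.1 (abs_phase_re_le_one η)).2

/-- `K` is smooth and depends only on the direction of its argument, and `k` is its derivative
in the angle. -/
structure IsAngularPrimitive (K k : ℂ → ℝ) : Prop where
  contDiffAt : ∀ η, η ≠ 0 → ContDiffAt ℝ ∞ K η
  homogeneous : ∀ r : ℝ, 0 < r → ∀ η, K (r * η) = K η
  angular : ∀ η, η ≠ 0 → fderiv ℝ K η (2 * Real.pi * Complex.I * η) = k η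

theorem fderiv_phase {η : ℂ} (hη : η ≠ 0) :
    fderiv ℝ phase η (2 * Real.pi * Complex.I * η) = 2 * Real.pi * Complex.I * phase η := by
  have hD := hasFDerivAt_phase_zpow hη 1
  simp only [zpow_one] at hD
  rw [hD.fderiv, ContinuousLinearMap.smulRight_apply, smul_apply, angleForm_two_pi_I_mul hη]
  simp

theorem isAngularPrimitive_comp_phase {g : ℂ → ℝ} {k : ℂ → ℝ}
    (hg : ∀ e, ‖e‖ = 1 → ContDiffAt ℝ ∞ g e)
    (hk : ∀ η, η ≠ 0 → fderiv ℝ g (phase η) (2 * Real.pi * Complex.I * phase η) = k η) :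
    IsAngularPrimitive (fun η => g (phase η)) k where
  contDiffAt η hη := (hg _ (norm_phase hη)).comp η (contDiffAt_phase hη)
  homogeneous r hr η := by rw [phase_real_mul hr]
  angular η hη := by
    have hcomp := fderiv_comp η ((hg _ (norm_phase hη)).differentiableAt (by simp))
      ((contDiffAt_phase hη).differentiableAt (by simp))
    rw [← hk η hη, ← fderiv_phase hη]
    exact DFunLike.congr_fun hcomp _

/-- The cardioid `1 + (1 - c) cos t` in the argument `t` of `η`. -/
def cardioid (c : ℝ) (η : ℂ) : ℝ := 1 + (1 - c) * (phase η).re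

/-- The Poisson kernel with pole in the direction of the negative real axis, of mean value `1`.
For `ρ` close to `1` it is concentrated near that axis. -/
def spike (ρ : ℝ) (η : ℂ) : ℝ := (1 - ρ ^ 2) / (1 + ρ ^ 2 + 2 * ρ * (phase η).re)

theorem isAngularPrimitive_cardioid (c : ℝ) :
    IsAngularPrimitive (fun η => (1 - c) / (2 * Real.pi) * (phase η).im)
      (fun η => cardioid c η - 1) := by
  refine isAngularPrimitive_comp_phase (g := fun e => (1 - c) / (2 * Real.pi) * e.im)
    (fun e _ => contDiffAt_const.mul Complex.imCLM.contDiff.contDiffAt) fun η _ => ?_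
  have hD : HasFDerivAt (fun e : ℂ => (1 - c) / (2 * Real.pi) * e.im) _ (phase η) :=
    Complex.imCLM.hasFDerivAt.const_mul _
  rw [hD.fderiv, cardioid]
  have hpi := Real.pi_ne_zero
  simp
  field_simp

variable {c ρ : ℝ}

theorem one_add_mul_mem_slitPlane (hρ : 0 ≤ ρ) (hρ1 : ρ < 1) {e : ℂ} (he : ‖e‖ = 1) :
    1 + ρ * e ∈ Complex.slitPlane := by
  have hre := (abs_le.1 ((Complex.abs_re_le_norm e).trans he.le)).1
  refine Or.inl ?_
  rw [Complex.add_re, Complex.re_ofReal_mul, Complex.one_re]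
  nlinarith

theorem spike_denom_pos (hρ : 0 ≤ ρ) (hρ1 : ρ < 1) (η : ℂ) :
    0 < 1 + ρ ^ 2 + 2 * ρ * (phase η).re := by
  nlinarith [neg_one_le_phase_re η]

theorem isAngularPrimitive_spike (hρ : 0 ≤ ρ) (hρ1 : ρ < 1) :
    IsAngularPrimitive (fun η => -(1 / Real.pi) * (Complex.log (1 + ρ * phase η)).im)
      (fun η => spike ρ η - 1) := by
  have hlog : ∀ e : ℂ, ‖e‖ = 1 → HasFDerivAt
      (fun e : ℂ => -(1 / Real.pi) * (Complex.log (1 + ρ * e)).im) _ e := fun e he =>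
    (Complex.imCLM.hasFDerivAt.comp e (((((hasDerivAt_id e).const_mul (ρ : ℂ)).const_add 1).clog
      (one_add_mul_mem_slitPlane hρ hρ1 he)).hasFDerivAt.restrictScalars ℝ)).const_mul _
  refine isAngularPrimitive_comp_phase
    (g := fun e => -(1 / Real.pi) * (Complex.log (1 + ρ * e)).im) (fun e he => ?_)
    fun η hη => ?_
  · exact contDiffAt_const.mul (Complex.imCLM.contDiff.contDiffAt.comp e
      ((Complex.contDiffAt_log (one_add_mul_mem_slitPlane hρ hρ1 he)).restrict_scalars ℝ |>.comp e
        (contDiffAt_const.add (contDiffAt_const.mul contDiffAt_id))))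
  · rw [(hlog _ (norm_phase hη)).fderiv, spike]
    have hnorm : (phase η).re ^ 2 + (phase η).im ^ 2 = 1 := by
      have := Complex.sq_norm (phase η)
      rw [norm_phase hη, Complex.normSq_apply] at this
      linarith
    have hdenom := (spike_denom_pos hρ hρ1 η).ne'
    have hsq : Complex.normSq (1 + ρ * phase η) = 1 + ρ ^ 2 + 2 * ρ * (phase η).re := by
      simp [Complex.normSq_apply]
      linear_combination ρ ^ 2 * hnorm
    have hpi := Real.pi_ne_zero
    simp [Complex.div_re, Complex.div_im, hsq]
    field_simp
    linear_combination -(2 * ρ ^ 2) * hnorm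

end AngularKernels

section WarpedEmbeddings

variable {c ρ : ℝ} {T₁ T₂ : ℝ × ℝ → ℝ}

/-- The amounts `T₁ (x, N)` and `T₂ (x, N)` can be taken out of the area `x`, leaving a remainder
that is again increasing in `x`. -/
structure IsAreaSplitting (T₁ T₂ : ℝ × ℝ → ℝ) : Prop where
  contDiff_fst : ContDiff ℝ ∞ T₁
  contDiff_snd : ContDiff ℝ ∞ T₂
  fst_zero : ∀ N, T₁ (0, N) = 0
  snd_zero : ∀ N, T₂ (0, N) = 0
  fst_le : ∀ N x y, 0 ≤ x → x ≤ y → T₁ (x, N) ≤ T₁ (y, N)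
  snd_le : ∀ N x y, 0 ≤ x → x ≤ y → T₂ (x, N) ≤ T₂ (y, N)
  remainder_le : ∀ N x y, 0 ≤ x → x ≤ y →
    x - T₁ (x, N) - T₂ (x, N) ≤ y - T₁ (y, N) - T₂ (y, N)

/-- The area `y.1` with its part `T₁ y` spread over directions according to the cardioid and
its part `T₂ y` according to the spike. -/
def warp (c ρ : ℝ) (T₁ T₂ : ℝ × ℝ → ℝ) (η : ℂ) (y : ℝ × ℝ) : ℝ :=
  (y.1 - T₁ y - T₂ y) + cardioid c η * T₁ y + spike ρ η * T₂ y

theorem le_cardioid (hc1 : c ≤ 1) (η : ℂ) : c ≤ cardioid c η := by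
  have := mul_nonneg (sub_nonneg.2 hc1) (neg_le_iff_add_nonneg.1 (neg_one_le_phase_re η))
  rw [cardioid]
  linarith

theorem spike_nonneg (hρ : 0 ≤ ρ) (hρ1 : ρ < 1) (η : ℂ) : 0 ≤ spike ρ η :=
  div_nonneg (by nlinarith) (spike_denom_pos hρ hρ1 η).le

theorem le_spike (hρ : 0 ≤ ρ) (hρ1 : ρ < 1) (η : ℂ) : (1 - ρ ^ 2) / 4 ≤ spike ρ η := by
  refine div_le_div_of_nonneg_left (by nlinarith) (spike_denom_pos hρ hρ1 η) ?_
  nlinarith [phase_re_le_one η]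

theorem warp_zero (hT : IsAreaSplitting T₁ T₂) (c ρ : ℝ) (η : ℂ) (N : ℝ) :
    warp c ρ T₁ T₂ η (0, N) = 0 := by
  simp only [warp, hT.fst_zero, hT.snd_zero, mul_zero, sub_zero, add_zero]

theorem le_warp_sub_warp {m : ℝ} (hT : IsAreaSplitting T₁ T₂) {η : ℂ} (hm : m ≤ 1)
    (hcard : m ≤ cardioid c η) (hspike : m ≤ spike ρ η) {N x y : ℝ} (hx : 0 ≤ x) (hxy : x ≤ y) :
    m * (y - x) ≤ warp c ρ T₁ T₂ η (y, N) - warp c ρ T₁ T₂ η (x, N) := by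
  have h₀ := mul_le_mul_of_nonneg_right hm (sub_nonneg.2 (hT.remainder_le N x y hx hxy))
  have h₁ := mul_le_mul_of_nonneg_right hcard (sub_nonneg.2 (hT.fst_le N x y hx hxy))
  have h₂ := mul_le_mul_of_nonneg_right hspike (sub_nonneg.2 (hT.snd_le N x y hx hxy))
  simp only [warp]
  linarith

/-- The generating function of `warp`. -/
def warpGenerator (c ρ : ℝ) (T₁ T₂ : ℝ × ℝ → ℝ) (q : ℂ × ℝ × ℝ) : ℝ :=
  (1 - c) / (2 * Real.pi) * (phase q.1).im * T₁ q.2 +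
    -(1 / Real.pi) * (Complex.log (1 + ρ * phase q.1)).im * T₂ q.2

theorem isPolarGenerator_warpGenerator (hc : 0 < c) (hc1 : c ≤ 1) (hρ : 0 ≤ ρ) (hρ1 : ρ < 1)
    (hT : IsAreaSplitting T₁ T₂) :
    IsPolarGenerator (warpGenerator c ρ T₁ T₂) (fun q => warp c ρ T₁ T₂ q.1 q.2 - q.2.1) := by
  have hK₁ := isAngularPrimitive_cardioid c
  have hK₂ := isAngularPrimitive_spike hρ hρ1
  have hsmooth : ∀ q : ℂ × ℝ × ℝ, q.1 ≠ 0 → ContDiffAt ℝ ∞ (warpGenerator c ρ T₁ T₂) q :=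
    fun q hq => (((hK₁.contDiffAt _ hq).comp q contDiffAt_fst).mul
      (hT.contDiff_fst.contDiffAt.comp q contDiffAt_snd)).add
      (((hK₂.contDiffAt _ hq).comp q contDiffAt_fst).mul
        (hT.contDiff_snd.contDiffAt.comp q contDiffAt_snd))
  refine ⟨hsmooth, fun r hr η y => ?_, fun q hq => ?_, fun η N _ => ?_, ?_⟩
  · simp only [warpGenerator, phase_real_mul hr]
  · have hpartial : HasFDerivAt (fun η => warpGenerator c ρ T₁ T₂ (η, q.2)) _ q.1 :=
      (((hK₁.contDiffAt _ hq).differentiableAt (by simp)).hasFDerivAt.mul_const (T₁ q.2)).add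
        (((hK₂.contDiffAt _ hq).differentiableAt (by simp)).hasFDerivAt.mul_const (T₂ q.2))
    have htotal := ((hsmooth q hq).differentiableAt (by simp)).hasFDerivAt.comp q.1
      (f := fun η => (η, q.2)) (hasFDerivAt_prodMk_left q.1 q.2)
    have h := DFunLike.congr_fun (htotal.unique hpartial) (2 * Real.pi * Complex.I * q.1)
    rw [add_apply, smul_apply, smul_apply, hK₁.angular _ hq, hK₂.angular _ hq] at h
    refine h.trans ?_
    simp only [smul_eq_mul, warp]
    ring
  · simp only [warp_zero hT, sub_zero]
  · have hρ2 : 0 < (1 - ρ ^ 2) / 4 := by nlinarith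
    refine ⟨min (min c ((1 - ρ ^ 2) / 4)) 1, by positivity, fun η _ N _ x y hx hxy => ?_⟩
    simpa using le_warp_sub_warp (N := N) hT (min_le_right _ _)
      ((min_le_left _ _).trans ((min_le_left _ _).trans (le_cardioid hc1 η)))
      ((min_le_left _ _).trans ((min_le_right _ _).trans (le_spike hρ hρ1 η))) hx hxy

theorem embedsWith_warp (hc : 0 < c) (hc1 : c ≤ 1) (hρ : 0 ≤ ρ) (hρ1 : ρ < 1)
    (hT : IsAreaSplitting T₁ T₂) :
    EmbedsWith splitForm {p | p.2 ≠ 0} (fun a b => b.2 ≠ 0 ∧ area b.1 = area a.1 ∧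
      area a.2 = warp c ρ T₁ T₂ a.2 (area b.2, area a.1)) ∧
    EmbedsWith splitForm {p | p.2 ≠ 0} (fun b a => a.2 ≠ 0 ∧ area b.1 = area a.1 ∧
      area a.2 = warp c ρ T₁ T₂ a.2 (area b.2, area a.1)) := by
  have h := (isPolarGenerator_warpGenerator hc hc1 hρ hρ1 hT).embedsWith_relates_and_symm
    (isOpen_ne_fun continuous_snd continuous_const) subset_rfl fun p hp hp0 => absurd hp0 hp
  exact ⟨h.1.mono subset_rfl fun a _ b hb => ⟨hb.1, hb.2.1, hb.2.2.trans (by ring)⟩,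
    h.2.mono subset_rfl fun b _ a ha => ⟨ha.1, ha.2.1, ha.2.2.trans (by ring)⟩⟩

theorem embedsWith_warp_of_flat (hc : 0 < c) (hc1 : c ≤ 1) (hρ : 0 ≤ ρ) (hρ1 : ρ < 1)
    (hT : IsAreaSplitting T₁ T₂) {s : ℝ} (hs : 0 < s) (hT₁ : ∀ y : ℝ × ℝ, y.1 < s → T₁ y = 0)
    (hT₂ : ∀ y : ℝ × ℝ, y.1 < s → T₂ y = 0) :
    EmbedsWith splitForm univ (fun a b => area b.1 = area a.1 ∧
      area a.2 = warp c ρ T₁ T₂ a.2 (area b.2, area a.1)) ∧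
    EmbedsWith splitForm univ (fun b a => area b.1 = area a.1 ∧
      area a.2 = warp c ρ T₁ T₂ a.2 (area b.2, area a.1)) := by
  have h := (isPolarGenerator_warpGenerator hc hc1 hρ hρ1 hT).embedsWith_relates_and_symm
    isOpen_univ (subset_univ _) fun p _ hp => by
      have hp0 : (polarCoords p).2.1 < s := by
        rwa [polarCoords, hp, area_zero]
      filter_upwards [(continuous_fst.comp continuous_snd).continuousAt.eventually_lt
        continuousAt_const hp0] with q hq
      rw [warpGenerator, hT₁ _ hq, hT₂ _ hq, mul_zero, mul_zero, add_zero]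
  exact ⟨h.1.mono subset_rfl fun a _ b hb => ⟨hb.2.1, hb.2.2.trans (by ring)⟩,
    h.2.mono subset_rfl fun b _ a ha => ⟨ha.2.1, ha.2.2.trans (by ring)⟩⟩

end WarpedEmbeddings

/-! ### The effect of a small translation -/

section Translation

variable {c d ρ : ℝ}

theorem norm_mul_phase_re (η : ℂ) : ‖η‖ * (phase η).re = η.re := by
  rw [← Complex.re_ofReal_mul, norm_mul_phase]

theorem norm_mul_phase_im (η : ℂ) : ‖η‖ * (phase η).im = η.im := by
  rw [← Complex.im_ofReal_mul, norm_mul_phase]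

theorem sub_ofReal_re (η : ℂ) (d : ℝ) : (η - d).re = η.re - d := by
  rw [Complex.sub_re, Complex.ofReal_re]

theorem sub_ofReal_im (η : ℂ) (d : ℝ) : (η - d).im = η.im := by
  rw [Complex.sub_im, Complex.ofReal_im, sub_zero]

theorem abs_norm_sub_norm_sub_le (hd : 0 ≤ d) (η : ℂ) : |‖η - d‖ - ‖η‖| ≤ d := by
  simpa [abs_of_nonneg hd] using abs_norm_sub_norm_le (η - d) η

theorem norm_mul_normSq_phase (η : ℂ) :
    ‖η‖ * ((phase η).re ^ 2 + (phase η).im ^ 2) = ‖η‖ := by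
  rcases eq_or_ne η 0 with rfl | hη
  · simp
  · have := Complex.sq_norm (phase η)
    rw [norm_phase hη, Complex.normSq_apply] at this
    linear_combination -‖η‖ * this

/- With `e` and `f` the phases of `η` and `η - d`, pairing `‖η‖ e = ‖η - d‖ f + d` with `e - f`
gives `d (Re e - Re f) = (‖η‖ + ‖η - d‖) (1 - ⟨e, f⟩)`. -/
theorem phase_sub_re_le (hd : 0 ≤ d) (η : ℂ) : (phase (η - d)).re ≤ (phase η).re := by
  rcases hd.eq_or_lt with rfl | hd
  · simp
  have hinner : (phase η).re * (phase (η - d)).re + (phase η).im * (phase (η - d)).im ≤ 1 := by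
    have := (real_inner_le_norm (phase (η - d)) (phase η)).trans
      (mul_le_one₀ (norm_phase_le_one _) (norm_nonneg _) (norm_phase_le_one _))
    simpa [Complex.inner] using this
  have hre := norm_mul_phase_re (η - d)
  have him := norm_mul_phase_im (η - d)
  rw [sub_ofReal_re, ← norm_mul_phase_re η] at hre
  rw [sub_ofReal_im, ← norm_mul_phase_im η] at him
  have hη := norm_mul_normSq_phase η
  have hθ := norm_mul_normSq_phase (η - d)
  have hpairing : d * ((phase η).re - (phase (η - d)).re) = (‖η‖ + ‖η - d‖) *
      (1 - ((phase η).re * (phase (η - d)).re + (phase η).im * (phase (η - d)).im)) := by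
    linear_combination ((phase η).re - (phase (η - d)).re) * hre +
      ((phase η).im - (phase (η - d)).im) * him + hη + hθ
  exact sub_nonneg.1 (nonneg_of_mul_nonneg_right
    (hpairing.ge.trans' (mul_nonneg (by positivity) (sub_nonneg.2 hinner))) hd)

theorem norm_mul_phase_re_sub_le (hd : 0 ≤ d) (η : ℂ) :
    ‖η‖ * ((phase η).re - (phase (η - d)).re) ≤ 2 * d := by
  have hη := norm_mul_phase_re η
  have hθ := norm_mul_phase_re (η - d)
  rw [sub_ofReal_re] at hθ
  have hmul : (‖η - d‖ - ‖η‖) * (phase (η - d)).re ≤ d * 1 :=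
    (le_abs_self _).trans (abs_mul _ (phase (η - d)).re |>.trans_le
      (mul_le_mul (abs_norm_sub_norm_sub_le hd η) (abs_phase_re_le_one _) (abs_nonneg _) hd))
  linarith

theorem cardioid_sub_le (hc1 : c ≤ 1) (hd : 0 ≤ d) (η : ℂ) :
    cardioid c (η - d) ≤ cardioid c η :=
  add_le_add_right (mul_le_mul_of_nonneg_left (phase_sub_re_le hd η) (sub_nonneg.2 hc1)) 1

theorem spike_le_sub (hρ : 0 ≤ ρ) (hρ1 : ρ < 1) (hd : 0 ≤ d) (η : ℂ) :
    spike ρ η ≤ spike ρ (η - d) := by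
  refine div_le_div_of_nonneg_left (by nlinarith) (spike_denom_pos hρ hρ1 _) ?_
  exact add_le_add_right (mul_le_mul_of_nonneg_left (phase_sub_re_le hd η) (by positivity)) _

theorem area_sub (η : ℂ) (d : ℝ) :
    area (η - d) = area η - 2 * Real.pi * η.re * d + Real.pi * d ^ 2 := by
  rw [area_eq_re_im, area_eq_re_im, sub_ofReal_re, sub_ofReal_im]
  ring

theorem le_area_sub (hd : 0 ≤ d) (η : ℂ) :
    (1 - d) * area η - Real.pi * d ≤ area (η - d) := by
  have hnonneg : 0 ≤ Real.pi * d * ((η.re - 1) ^ 2 + η.im ^ 2) + Real.pi * d ^ 2 := by positivity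
  rw [area_sub, area_eq_re_im]
  linarith

theorem area_sub_le (hd : 0 ≤ d) (η : ℂ) :
    area (η - d) ≤ (1 + d) * area η + Real.pi * d + Real.pi * d ^ 2 := by
  have hnonneg : 0 ≤ Real.pi * d * ((η.re + 1) ^ 2 + η.im ^ 2) := by positivity
  rw [area_sub, area_eq_re_im]
  linarith

end Translation

section Estimates

variable {c d ρ k M : ℝ} {ζ : ℂ}

theorem cardioid_nonneg (hc : 0 ≤ c) (hc1 : c ≤ 1) (η : ℂ) : 0 ≤ cardioid c η :=
  hc.trans (le_cardioid hc1 η)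

theorem cardioid_le_two (hc : 0 ≤ c) (hc1 : c ≤ 1) (η : ℂ) : cardioid c η ≤ 2 := by
  have := mul_le_one₀ (a := 1 - c) (b := |(phase η).re|) (by linarith) (abs_nonneg _)
    (abs_phase_re_le_one η)
  have := mul_le_mul_of_nonneg_left (le_abs_self (phase η).re) (sub_nonneg.2 hc1)
  rw [cardioid]
  linarith

/- For `k` small, `‖ζ‖ (‖ζ‖ + Re ζ) ≤ k` confines `ζ` to a thin neighbourhood of the negative
real axis: this is what the spike sees. -/
theorem norm_mul_norm_add_re_le (hρ : 0 < ρ) (hρ1 : ρ < 1) (h : area ζ ≤ spike ρ ζ * M) :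
    ‖ζ‖ * (‖ζ‖ + ζ.re) ≤ (1 - ρ ^ 2) * M / (2 * Real.pi * ρ) := by
  have hdenom := spike_denom_pos hρ.le hρ1 ζ
  rw [spike, div_mul_eq_mul_div, le_div_iff₀ hdenom, area_eq_norm] at h
  rw [le_div_iff₀ (by positivity), ← norm_mul_phase_re ζ]
  have : 0 ≤ Real.pi * ‖ζ‖ ^ 2 * (1 - ρ) ^ 2 := by positivity
  linarith

theorem sq_norm_eq_re_im (η : ℂ) : ‖η‖ ^ 2 = η.re ^ 2 + η.im ^ 2 := by
  rw [← Complex.normSq_eq_norm_sq, Complex.normSq_apply]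
  ring

section Thin

variable (hd : 0 < d) (hk : k ≤ d ^ 2 / 4) (h : ‖ζ‖ * (‖ζ‖ + ζ.re) ≤ k)
include hd hk h

theorem re_le_half_of_thin : ζ.re ≤ d / 2 := by
  by_contra! hre
  nlinarith [Complex.re_le_norm ζ]

theorem sq_div_four_le_sq_norm_sub : d ^ 2 / 4 ≤ ‖ζ - d‖ ^ 2 := by
  have hre := re_le_half_of_thin hd hk h
  rw [sq_norm_eq_re_im, sub_ofReal_re]
  nlinarith [sq_nonneg (ζ - d).im]

theorem one_add_phase_re_sub_le : (1 + (phase (ζ - d)).re) * d ^ 2 ≤ 8 * k := by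
  have hre := re_le_half_of_thin hd hk h
  have hphase := neg_le_iff_add_nonneg'.1 (neg_one_le_phase_re (ζ - d))
  have him : ζ.im ^ 2 ≤ 2 * k := by
    have hnorm := sq_norm_eq_re_im ζ
    have hre_le := abs_le.1 (Complex.abs_re_le_norm ζ)
    nlinarith [mul_nonneg (norm_nonneg ζ) (neg_le_iff_add_nonneg.1 hre_le.1)]
  have hsplit : (1 + (phase (ζ - d)).re) * (‖ζ - d‖ * (‖ζ - d‖ + (d - ζ.re))) = ζ.im ^ 2 := by
    have hnorm := sq_norm_eq_re_im (ζ - d)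
    have hmul := norm_mul_phase_re (ζ - d)
    rw [sub_ofReal_re] at hnorm hmul
    rw [sub_ofReal_im] at hnorm
    linear_combination (‖ζ - d‖ + (d - ζ.re)) * hmul + hnorm
  have hsq : d ^ 2 / 4 ≤ ‖ζ - d‖ * (‖ζ - d‖ + (d - ζ.re)) :=
    (sq_div_four_le_sq_norm_sub hd hk h).trans
      (by nlinarith [mul_nonneg (norm_nonneg (ζ - d)) (by linarith : 0 ≤ d - ζ.re)])
  linarith [mul_le_mul_of_nonneg_left hsq hphase]

end Thin

theorem lt_area_sub_of_le_spike {e x : ℝ} (hc : 0 ≤ c) (hc1 : c ≤ 1) (hρ : 0 < ρ) (hρ1 : ρ < 1)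
    (hd : 0 < d) (hk : k = (1 - ρ ^ 2) * M / (2 * Real.pi * ρ)) (hkd : k ≤ d ^ 2 / 4)
    (hM : e + (c + 8 * k / d ^ 2) * M < Real.pi * (d ^ 2 / 4)) (hζ : area ζ ≤ spike ρ ζ * M)
    (hx : 0 ≤ x) (hxM : x ≤ M) : e + cardioid c (ζ - d) * x < area (ζ - d) := by
  have hthin := (norm_mul_norm_add_re_le hρ hρ1 hζ).trans_eq hk.symm
  have hphase := (le_div_iff₀ (by positivity)).2 (one_add_phase_re_sub_le hd hkd hthin)
  have hphase0 := neg_le_iff_add_nonneg'.1 (neg_one_le_phase_re (ζ - d))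
  have hcard : cardioid c (ζ - d) ≤ c + 8 * k / d ^ 2 := by
    rw [cardioid]
    linarith [mul_nonneg hc hphase0]
  calc e + cardioid c (ζ - d) * x ≤ e + (c + 8 * k / d ^ 2) * M := by
        gcongr
        exact (cardioid_nonneg hc hc1 _).trans hcard
    _ < Real.pi * (d ^ 2 / 4) := hM
    _ ≤ area (ζ - d) := by
        rw [area_eq_norm]
        exact mul_le_mul_of_nonneg_left (sq_div_four_le_sq_norm_sub hd hkd hthin) Real.pi_pos.le

theorem lt_add_of_cardioid_bounds {e x y ε : ℝ} (hc : 0 ≤ c) (hc1 : c ≤ 1) (hd : 0 ≤ d)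
    (hd1 : d ≤ 1) (he : e < Real.pi * d ^ 2) (hε : e + Real.pi * d + d * M < ε) (he0 : 0 ≤ e)
    (hM : 0 ≤ M) (hx : 0 ≤ x) (hy : y ≤ M) (hθ : area (ζ - d) ≤ e + cardioid c (ζ - d) * x)
    (hζ : cardioid c ζ * y ≤ area ζ) : y < x + ε := by
  by_contra! hxy
  have hcard := cardioid_nonneg hc hc1 ζ
  have hx' : cardioid c (ζ - d) * x ≤ cardioid c ζ * (y - ε) :=
    mul_le_mul (cardioid_sub_le hc1 hd ζ) (by linarith) hx hcard
  have hε0 : 0 ≤ ε := by linarith [mul_nonneg Real.pi_pos.le hd, mul_nonneg hd hM]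
  rcases le_total ζ.re 0 with hre | hre
  · have : area ζ + Real.pi * d ^ 2 ≤ area (ζ - d) := by
      rw [area_sub]
      linarith [mul_nonneg (mul_nonneg Real.pi_pos.le (neg_nonneg.2 hre)) hd]
    linarith [mul_nonneg hcard hε0]
  · have hcard1 : 1 ≤ cardioid c ζ := by
      rw [cardioid, phase_eq, Complex.re_ofReal_mul]
      exact le_add_of_nonneg_right
        (mul_nonneg (sub_nonneg.2 hc1) (mul_nonneg (inv_nonneg.2 (norm_nonneg _)) hre))
    have hlow := le_area_sub hd ζ
    have : (1 - d) * (cardioid c ζ * y) ≤ (1 - d) * area ζ :=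
      mul_le_mul_of_nonneg_left hζ (sub_nonneg.2 hd1)
    have : cardioid c ζ * (d * y) ≤ cardioid c ζ * (d * M) := by gcongr
    have : 1 * (ε - d * M) ≤ cardioid c ζ * (ε - d * M) :=
      mul_le_mul_of_nonneg_right hcard1 (by linarith [mul_nonneg Real.pi_pos.le hd])
    linarith

theorem cardioid_le_sub_add {δ : ℝ} (hc : 0 ≤ c) (hδ : 0 < δ) (hζ : δ ≤ ‖ζ‖) :
    cardioid c ζ ≤ cardioid c (ζ - (δ ^ 2 : ℝ)) + 2 * δ := by
  have hdecr := sub_nonneg.2 (phase_sub_re_le (sq_nonneg δ) ζ)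
  have hmul := (mul_le_mul_of_nonneg_right hζ hdecr).trans
    (norm_mul_phase_re_sub_le (sq_nonneg δ) ζ)
  have hphase : (phase ζ).re - (phase (ζ - (δ ^ 2 : ℝ))).re ≤ 2 * δ :=
    le_of_mul_le_mul_left (hmul.trans_eq (by ring)) hδ
  have := mul_le_of_le_one_left hdecr (sub_le_self 1 hc)
  rw [cardioid, cardioid]
  linarith

theorem mul_cardioid_mul_le {P δ : ℝ} (hc : 0 ≤ c) (hc1 : c ≤ 1) (hδ : 0 < δ) (hδ1 : δ ≤ 1)
    (hP : 0 ≤ P) (hPM : P ≤ M) (hζ : δ ≤ ‖ζ‖) :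
    (1 + δ ^ 2) * (cardioid c ζ * P) ≤
      cardioid c (ζ - (δ ^ 2 : ℝ)) * P + δ * (4 * M) := by
  have hturn : cardioid c ζ * P ≤ (cardioid c (ζ - (δ ^ 2 : ℝ)) + 2 * δ) * P :=
    mul_le_mul_of_nonneg_right (cardioid_le_sub_add hc hδ hζ) hP
  have hscale : δ ^ 2 * (cardioid c ζ * P) ≤ δ * (2 * M) :=
    mul_le_mul (pow_le_of_le_one hδ.le hδ1 two_ne_zero)
      (mul_le_mul (cardioid_le_two hc hc1 ζ) hPM hP zero_le_two)
      (mul_nonneg (cardioid_nonneg hc hc1 ζ) hP) hδ.le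
  linarith [mul_le_mul_of_nonneg_left hPM hδ.le]

theorem mul_spike_mul_le {A κ ε : ℝ} (hρ : 0 ≤ ρ) (hρ1 : ρ < 1) (hd : 0 ≤ d) (hA : 0 ≤ A)
    (h : (κ + d) * A ≤ (1 - κ) * ε) :
    (1 + d) * (spike ρ ζ * A) ≤ (1 - κ) * spike ρ (ζ - d) * (A + ε) :=
  calc (1 + d) * (spike ρ ζ * A) = spike ρ ζ * ((1 + d) * A) := by ring
    _ ≤ spike ρ (ζ - d) * ((1 - κ) * (A + ε)) :=
      mul_le_mul (spike_le_sub hρ hρ1 hd ζ) (by linarith) (by positivity)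
        (spike_nonneg hρ hρ1 _)
    _ = (1 - κ) * spike ρ (ζ - d) * (A + ε) := by ring

/- The translation by `δ ^ 2` moves the directions of the points outside the disk of radius `δ` by
`O(δ)` only, and inside this disk the area is negligible against `κ ε`. -/
theorem area_sub_lt {A P δ κ ε : ℝ} (hc : 0 ≤ c) (hc1 : c ≤ 1) (hρ : 0 ≤ ρ) (hρ1 : ρ < 1)
    (hδ : 0 < δ) (hδ1 : δ ≤ 1) (hκ : 0 ≤ κ) (hκ1 : κ ≤ 1) (hκδ : (κ + δ ^ 2) * M ≤ (1 - κ) * ε)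
    (hδκ : δ * (4 * M + 4 * Real.pi) < κ * ε) (hε : 0 ≤ ε) (hA : 0 ≤ A) (hAM : A ≤ M) (hP : 0 ≤ P)
    (hPM : P ≤ M) (hζ : area ζ ≤ cardioid c ζ * P + spike ρ ζ * A) :
    area (ζ - (δ ^ 2 : ℝ)) < cardioid c (ζ - (δ ^ 2 : ℝ)) * P +
      ((1 - κ) * spike ρ (ζ - (δ ^ 2 : ℝ)) + κ) * (A + ε) := by
  have hshift := area_sub_le (sq_nonneg δ) ζ
  have hspike := spike_nonneg hρ hρ1 (ζ - (δ ^ 2 : ℝ))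
  have hcard := cardioid_nonneg hc hc1 (ζ - (δ ^ 2 : ℝ))
  have hδ2 : δ ^ 2 ≤ δ := pow_le_of_le_one hδ.le hδ1 two_ne_zero
  have hπδ2 : Real.pi * δ ^ 2 ≤ Real.pi * δ := by gcongr
  have hπδ4 : Real.pi * (δ ^ 2) ^ 2 ≤ Real.pi * δ ^ 2 :=
    mul_le_mul_of_nonneg_left
      (pow_le_of_le_one (sq_nonneg δ) (hδ2.trans hδ1) two_ne_zero) Real.pi_pos.le
  have hκA : 0 ≤ κ * A := by positivity
  have hcardP := mul_nonneg hcard hP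
  rcases le_total ‖ζ‖ δ with hsmall | hlarge
  · have harea : (1 + δ ^ 2) * area ζ ≤ 2 * (Real.pi * δ ^ 2) := by
      rw [area_eq_norm]
      gcongr
      linarith
    have := mul_nonneg (mul_nonneg (sub_nonneg.2 hκ1) hspike) (add_nonneg hA hε)
    linarith [mul_nonneg hδ.le (hP.trans hPM)]
  · have hpart := mul_cardioid_mul_le hc hc1 hδ hδ1 hP hPM hlarge
    have hspread := mul_spike_mul_le (ζ := ζ) hρ hρ1 (sq_nonneg δ) hA
      ((mul_le_mul_of_nonneg_left hAM (add_nonneg hκ (sq_nonneg δ))).trans hκδ)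
    have := mul_le_mul_of_nonneg_left hζ (add_nonneg zero_le_one (sq_nonneg δ))
    linarith [mul_pos Real.pi_pos hδ]

end Estimates

section Splittings

variable {l q κ x y : ℝ}

/-- A smooth approximation of the identity of the half-line that vanishes near `0`. -/
def flatId (l x : ℝ) : ℝ := ramp l (x - l)

theorem ramp_sub_le (hl : 0 < l) (hx : 0 ≤ x) (hq : 0 ≤ q) : ramp l (x - q) ≤ x :=
  (monotone_ramp l (sub_le_self x hq)).trans (ramp_le hl hx)

theorem contDiff_flatId (l : ℝ) : ContDiff ℝ ∞ (flatId l) :=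
  (contDiff_ramp l).comp (contDiff_id.sub contDiff_const)

theorem monotone_flatId (l : ℝ) : Monotone (flatId l) := fun _ _ hxy =>
  monotone_ramp l (sub_le_sub_right hxy l)

theorem flatId_sub_flatId_le (l : ℝ) (hxy : x ≤ y) : flatId l y - flatId l x ≤ y - x :=
  (ramp_sub_ramp_le l (sub_le_sub_right hxy l)).trans_eq (by ring)

theorem flatId_of_le (hl : 0 < l) (hx : x ≤ l) : flatId l x = 0 :=
  ramp_of_nonpos hl (sub_nonpos.2 hx)

theorem flatId_le (hl : 0 < l) (hx : 0 ≤ x) : flatId l x ≤ x := by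
  simpa [flatId_of_le hl hl.le] using flatId_sub_flatId_le l hx

theorem sub_two_mul_le_flatId (hl : 0 < l) (x : ℝ) : x - 2 * l ≤ flatId l x :=
  (sub_le_ramp hl (x - l)).trans' (by linarith)

/-- The part of the area `y.1` beyond the threshold `q`. -/
def excess (q l : ℝ) (y : ℝ × ℝ) : ℝ := ramp l (y.1 - q)

/-- The part of the area `y.1` beyond the excess of `y.2` over `q`. -/
def overflow (q l : ℝ) (y : ℝ × ℝ) : ℝ := ramp l (flatId l y.1 - ramp l (y.2 - q))

theorem isAreaSplitting_excess (hl : 0 < l) (hq : 0 ≤ q) :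
    IsAreaSplitting (excess q l) (fun y => y.1 - excess q l y) := by
  have hzero : ∀ N, excess q l (0, N) = 0 := fun N => ramp_of_nonpos hl (by simpa using hq)
  have hsmooth : ContDiff ℝ ∞ (excess q l) :=
    (contDiff_ramp l).comp (contDiff_fst.sub contDiff_const)
  refine ⟨hsmooth, contDiff_fst.sub hsmooth, hzero, fun N => ?_, fun N x y _ hxy => ?_,
    fun N x y _ hxy => ?_, fun N x y _ _ => ?_⟩
  · rw [hzero, sub_zero]
  · exact monotone_ramp l (sub_le_sub_right hxy q)
  · linarith [ramp_sub_ramp_le l (sub_le_sub_right hxy q), excess.eq_1 q l (x, N),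
      excess.eq_1 q l (y, N)]
  · simp

theorem overflow_of_flatId_le (hl : 0 < l) {y : ℝ × ℝ} (h : flatId l y.1 ≤ ramp l (y.2 - q)) :
    overflow q l y = 0 :=
  ramp_of_nonpos hl (sub_nonpos.2 h)

theorem overflow_of_le (hl : 0 < l) {y : ℝ × ℝ} (hy : y.1 ≤ l) : overflow q l y = 0 :=
  overflow_of_flatId_le hl ((flatId_of_le hl hy).trans_le (ramp_nonneg hl _))

theorem isAreaSplitting_overflow (hl : 0 < l) (hκ : κ ∈ Icc (0 : ℝ) 1) :
    IsAreaSplitting (fun y => flatId l y.1 - overflow q l y)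
      (fun y => (1 - κ) * overflow q l y) := by
  have hflat : ContDiff ℝ ∞ fun y : ℝ × ℝ => flatId l y.1 := (contDiff_flatId l).comp contDiff_fst
  have hsmooth : ContDiff ℝ ∞ (overflow q l) := (contDiff_ramp l).comp
    (hflat.sub ((contDiff_ramp l).comp (contDiff_snd.sub contDiff_const)))
  have hmono : ∀ N x y, x ≤ y → overflow q l (x, N) ≤ overflow q l (y, N) := fun N x y hxy =>
    monotone_ramp l (sub_le_sub_right (monotone_flatId l hxy) _)
  refine ⟨hflat.sub hsmooth, contDiff_const.mul hsmooth, fun N => ?_, fun N => ?_,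
    fun N x y _ hxy => ?_, fun N x y _ hxy => ?_, fun N x y _ hxy => ?_⟩
  · simp only [overflow_of_le hl (y := (0, N)) hl.le, flatId_of_le hl hl.le, sub_zero]
  · simp only [overflow_of_le hl (y := (0, N)) hl.le, mul_zero]
  · have := ramp_sub_ramp_le l (sub_le_sub_right (monotone_flatId l hxy) (ramp l (N - q)))
    simp only [overflow]
    linarith
  · exact mul_le_mul_of_nonneg_left (hmono N x y hxy) (sub_nonneg.2 hκ.2)
  · linarith [flatId_sub_flatId_le l hxy, mul_le_mul_of_nonneg_left (hmono N x y hxy) hκ.1]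

theorem isAreaSplitting_flatId (hl : 0 < l) :
    IsAreaSplitting (fun y => flatId l y.1) (fun _ => 0) where
  contDiff_fst := (contDiff_flatId l).comp contDiff_fst
  contDiff_snd := contDiff_const
  fst_zero _ := flatId_of_le hl hl.le
  snd_zero _ := rfl
  fst_le _ _ _ _ hxy := monotone_flatId l hxy
  snd_le _ _ _ _ _ := le_rfl
  remainder_le _ _ _ _ hxy := by linarith [flatId_sub_flatId_le l hxy]

theorem isAreaSplitting_fst : IsAreaSplitting (fun y => y.1) (fun _ => 0) where
  contDiff_fst := contDiff_fst
  contDiff_snd := contDiff_const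
  fst_zero _ := rfl
  snd_zero _ := rfl
  fst_le _ _ _ _ hxy := hxy
  snd_le _ _ _ _ _ := le_rfl
  remainder_le _ _ _ _ _ := by simp

end Splittings

/-! ### Twisted translations -/

section TwistedTranslation

/-- Parameters for which the errors of the estimates below add up to at most `ε` on areas up to
`M`. They are to be chosen in the order `κ`, `δ`, `c`, `ρ`, `l`. -/
structure IsFine (M ε κ δ c ρ l : ℝ) : Prop where
  kappa_mem : κ ∈ Ioo (0 : ℝ) 1
  delta_mem : δ ∈ Ioo (0 : ℝ) 1
  c_mem : c ∈ Ioo (0 : ℝ) 1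
  rho_mem : ρ ∈ Ioo (0 : ℝ) 1
  l_pos : 0 < l
  spread : (κ + δ ^ 2) * M ≤ (1 - κ) * ε
  centre : δ * (4 * M + 4 * Real.pi) < κ * ε
  drift : 2 * l + Real.pi * δ ^ 2 + δ ^ 2 * M < ε
  thin : (1 - ρ ^ 2) * M / (2 * Real.pi * ρ) ≤ (δ ^ 2) ^ 2 / 4
  notch : 2 * l + (c + 8 * ((1 - ρ ^ 2) * M / (2 * Real.pi * ρ)) / (δ ^ 2) ^ 2) * M <
    Real.pi * ((δ ^ 2) ^ 2 / 4)
  smoothing : 3 * l ≤ ε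

theorem exists_mem_Ioo_zero_one_of_tendsto {P : ℝ → Prop} (h : ∀ᶠ t in 𝓝 0, P t) :
    ∃ t ∈ Ioo (0 : ℝ) 1, P t :=
  let ⟨t, ht, htP⟩ := ((eventually_mem_set.2 (Ioo_mem_nhdsGT one_pos)).and
    (nhdsWithin_le_nhds h)).exists
  ⟨t, ht, htP⟩

theorem exists_isFine (M : ℝ) {ε : ℝ} (hε : 0 < ε) : ∃ κ δ c ρ l, IsFine M ε κ δ c ρ l := by
  have hpi := Real.pi_pos
  obtain ⟨κ, hκ, hκM⟩ : ∃ κ ∈ Ioo (0 : ℝ) 1, κ * M < (1 - κ) * ε := by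
    refine exists_mem_Ioo_zero_one_of_tendsto
      (ContinuousAt.eventually_lt (by fun_prop) (by fun_prop) (by simpa))
  obtain ⟨δ, hδ, hspread, hcentre, hdrift⟩ : ∃ δ ∈ Ioo (0 : ℝ) 1,
      (κ + δ ^ 2) * M < (1 - κ) * ε ∧ δ * (4 * M + 4 * Real.pi) < κ * ε ∧
        Real.pi * δ ^ 2 + δ ^ 2 * M < ε := by
    refine exists_mem_Ioo_zero_one_of_tendsto (.and ?_ (.and ?_ ?_))
    · exact ContinuousAt.eventually_lt (by fun_prop) (by fun_prop) (by simpa)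
    · exact ContinuousAt.eventually_lt (by fun_prop) (by fun_prop) (by simpa using mul_pos hκ.1 hε)
    · exact ContinuousAt.eventually_lt (by fun_prop) (by fun_prop) (by simpa)
  have hδ4 : 0 < (δ ^ 2) ^ 2 / 4 := by
    have := hδ.1
    positivity
  obtain ⟨c, hc, hcM⟩ : ∃ c ∈ Ioo (0 : ℝ) 1, c * M < Real.pi * ((δ ^ 2) ^ 2 / 4) :=
    exists_mem_Ioo_zero_one_of_tendsto
      (ContinuousAt.eventually_lt (by fun_prop) (by fun_prop) (by simpa using mul_pos hpi hδ4))
  have hk : ContinuousAt (fun t : ℝ => (1 - (1 - t) ^ 2) * M / (2 * Real.pi * (1 - t))) 0 :=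
    ContinuousAt.div (by fun_prop) (by fun_prop) (by simp [hpi.ne'])
  obtain ⟨t, ht, hthin, hnotch⟩ : ∃ t ∈ Ioo (0 : ℝ) 1,
      (1 - (1 - t) ^ 2) * M / (2 * Real.pi * (1 - t)) < (δ ^ 2) ^ 2 / 4 ∧
        (c + 8 * ((1 - (1 - t) ^ 2) * M / (2 * Real.pi * (1 - t))) / (δ ^ 2) ^ 2) * M <
          Real.pi * ((δ ^ 2) ^ 2 / 4) := by
    refine exists_mem_Ioo_zero_one_of_tendsto (.and ?_ ?_)
    · exact hk.eventually_lt continuousAt_const (by simpa using hδ4)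
    · exact ContinuousAt.eventually_lt (((continuousAt_const.add
        ((continuousAt_const.mul hk).div_const _))).mul_const M) continuousAt_const (by simpa)
  obtain ⟨l, hl, hdrift', hnotch', hsmooth⟩ : ∃ l ∈ Ioo (0 : ℝ) 1,
      2 * l + Real.pi * δ ^ 2 + δ ^ 2 * M < ε ∧
        2 * l + (c + 8 * ((1 - (1 - t) ^ 2) * M / (2 * Real.pi * (1 - t))) / (δ ^ 2) ^ 2) * M <
          Real.pi * ((δ ^ 2) ^ 2 / 4) ∧ 3 * l < ε := by
    refine exists_mem_Ioo_zero_one_of_tendsto (.and ?_ (.and ?_ ?_)) <;>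
    exact ContinuousAt.eventually_lt (by fun_prop) (by fun_prop) (by simpa)
  exact ⟨κ, δ, c, 1 - t, l, hκ, hδ, hc, ⟨by linarith [ht.2], by linarith [ht.1]⟩, hl.1,
    hspread.le, hcentre, hdrift', hthin.le, hnotch', hsmooth.le⟩

variable {M ε κ δ c ρ l q N x x' : ℝ} {ζ : ℂ}

namespace IsFine

variable (h : IsFine M ε κ δ c ρ l)
include h

theorem delta_sq_le_one : δ ^ 2 ≤ 1 := pow_le_one₀ h.delta_mem.1.le h.delta_mem.2.le

theorem hole (hM : 0 ≤ M) : 2 * l + c * M < Real.pi * ((δ ^ 2) ^ 2 / 4) := by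
  have hk : 0 ≤ 8 * ((1 - ρ ^ 2) * M / (2 * Real.pi * ρ)) / (δ ^ 2) ^ 2 * M := by
    have hρ := h.rho_mem.1
    have hρ2 : 0 ≤ 1 - ρ ^ 2 := sub_nonneg.2 (pow_le_one₀ hρ.le h.rho_mem.2.le)
    positivity
  linarith [h.notch]

theorem lt_add_of_cardioid_bounds (hM : 0 ≤ M) (hx : 0 ≤ x) (hx' : x' ≤ M)
    (hθ : area (ζ - (δ ^ 2 : ℝ)) ≤ 2 * l + cardioid c (ζ - (δ ^ 2 : ℝ)) * x)
    (hζ : cardioid c ζ * x' ≤ area ζ) : x' < x + ε := by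
  have hc := h.c_mem
  refine _root_.lt_add_of_cardioid_bounds hc.1.le hc.2.le (sq_nonneg δ) h.delta_sq_le_one ?_
    h.drift (by linarith [h.l_pos]) hM hx hx' hθ hζ
  have : 0 ≤ c * M := mul_nonneg hc.1.le hM
  have : 0 ≤ Real.pi * (δ ^ 2) ^ 2 := by positivity
  linarith [h.hole hM]

theorem area_le (hxN : x ≤ N)
    (hζ : area ζ = warp c ρ (excess q l) (fun y => y.1 - excess q l y) ζ (x, N)) :
    area ζ ≤ cardioid c ζ * ramp l (N - q) + spike ρ ζ * (N - ramp l (N - q)) := by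
  have hcard := cardioid_nonneg h.c_mem.1.le h.c_mem.2.le ζ
  have hspike := spike_nonneg h.rho_mem.1.le h.rho_mem.2 ζ
  have := mul_le_mul_of_nonneg_left (monotone_ramp l (sub_le_sub_right hxN q)) hcard
  have := mul_le_mul_of_nonneg_left (ramp_sub_ramp_le l (sub_le_sub_right hxN q)) hspike
  simp only [hζ, warp, excess]
  linarith

theorem cardioid_mul_excess_le (hq : 0 ≤ q) (hx : 0 ≤ x)
    (hζ : area ζ = warp c ρ (excess q l) (fun y => y.1 - excess q l y) ζ (x, N)) :
    cardioid c ζ * ramp l (x - q) ≤ area ζ := by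
  have hspike := spike_nonneg h.rho_mem.1.le h.rho_mem.2 ζ
  have := mul_nonneg hspike (sub_nonneg.2 (ramp_sub_le h.l_pos hx hq))
  simp only [hζ, warp, excess]
  linarith

theorem le_area_of_add_le {θ : ℂ} (hq : 0 ≤ q) (hN : 0 ≤ N) (hNx' : N + 2 * ε ≤ x')
    (hθ : area θ = warp c ρ (fun y => flatId l y.1 - overflow q l y)
      (fun y => (1 - κ) * overflow q l y) θ (x', N)) :
    cardioid c θ * ramp l (N - q) + ((1 - κ) * spike ρ θ + κ) * (N - ramp l (N - q) + ε) ≤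
      area θ := by
  have hcard := cardioid_nonneg h.c_mem.1.le h.c_mem.2.le θ
  have hspike := spike_nonneg h.rho_mem.1.le h.rho_mem.2 θ
  have hweight : 0 ≤ (1 - κ) * spike ρ θ + κ :=
    add_nonneg (mul_nonneg (sub_nonneg.2 h.kappa_mem.2.le) hspike) h.kappa_mem.1.le
  have hl := h.l_pos
  have hsmooth := h.smoothing
  have hP := ramp_sub_le hl hN hq
  have hflat := sub_two_mul_le_flatId hl x'
  have hflat' := flatId_le hl (by linarith : 0 ≤ x')
  have hover : overflow q l (x', N) ≤ flatId l x' - ramp l (N - q) := ramp_le hl (by linarith)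
  have hover' : flatId l x' - ramp l (N - q) - l ≤ overflow q l (x', N) := sub_le_ramp hl _
  have := mul_le_mul_of_nonneg_left (le_sub_comm.1 hover) hcard
  have := mul_le_mul_of_nonneg_left
    (by linarith : N - ramp l (N - q) + ε ≤ overflow q l (x', N)) hweight
  rw [hθ, warp]
  linarith

theorem area_le_of_overflow_eq_zero {θ : ℂ} (hx' : 0 ≤ x')
    (hover : overflow q l (x', N) = 0)
    (hθ : area θ = warp c ρ (fun y => flatId l y.1 - overflow q l y)
      (fun y => (1 - κ) * overflow q l y) θ (x', N)) :
    area θ ≤ 2 * l + cardioid c θ * x' := by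
  have := mul_le_mul_of_nonneg_left (flatId_le h.l_pos hx')
    (cardioid_nonneg h.c_mem.1.le h.c_mem.2.le θ)
  simp only [hθ, warp, hover]
  linarith [sub_two_mul_le_flatId h.l_pos x']

theorem overflow_eq_zero (hx' : 0 ≤ x') (hx'N : x' ≤ N - q - 2 * ε) :
    overflow q l (x', N) = 0 := by
  refine overflow_of_flatId_le h.l_pos ((flatId_le h.l_pos hx').trans ?_)
  linarith [sub_le_ramp h.l_pos (N - q), h.smoothing, h.l_pos]

section

variable (hq : 0 ≤ q) (hx : 0 ≤ x) (hxN : x ≤ N) (hNM : N ≤ M) (hx' : 0 ≤ x')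
  (hζ : area ζ = warp c ρ (excess q l) (fun y => y.1 - excess q l y) ζ (x, N))
  (hθ : area (ζ - (δ ^ 2 : ℝ)) = warp c ρ (fun y => flatId l y.1 - overflow q l y)
    (fun y => (1 - κ) * overflow q l y) (ζ - (δ ^ 2 : ℝ)) (x', N))
include hx hxN hNM hζ hθ

include hq in
theorem lt_add_of_warp : x' < N + 2 * ε := by
  by_contra! hNx'
  have hN := hx.trans hxN
  have hP := ramp_nonneg h.l_pos (N - q)
  have hPN := ramp_sub_le h.l_pos hN hq
  refine (area_sub_lt h.c_mem.1.le h.c_mem.2.le h.rho_mem.1.le h.rho_mem.2 h.delta_mem.1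
    h.delta_mem.2.le h.kappa_mem.1.le h.kappa_mem.2.le h.spread h.centre ?_ (sub_nonneg.2 hPN)
    (by linarith) hP (hPN.trans hNM) (h.area_le hxN hζ)).not_ge
    (h.le_area_of_add_le hq hN hNx' hθ)
  linarith [h.smoothing, h.l_pos]

include hq hx' in
theorem sub_lt_of_warp : x - q - 2 * ε < x' := by
  by_contra! hx'x
  have hover := h.overflow_eq_zero (N := N) (q := q) hx' (by linarith)
  have hex := ramp_sub_le h.l_pos hx hq
  have := h.lt_add_of_cardioid_bounds (hx.trans (hxN.trans hNM)) hx' (by linarith)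
    (h.area_le_of_overflow_eq_zero hx' hover hθ) (h.cardioid_mul_excess_le hq hx hζ)
  linarith [sub_le_ramp h.l_pos (x - q), h.smoothing, h.l_pos]

include hx' in
theorem sub_lt_of_warp_of_lt (hxq : x < q) : N - q - 2 * ε < x' := by
  by_contra! hx'N
  have hover := h.overflow_eq_zero hx' hx'N
  have hspike : area ζ ≤ spike ρ ζ * M := by
    have hex : excess q l (x, N) = 0 := ramp_of_nonpos h.l_pos (sub_nonpos.2 hxq.le)
    simp only [hζ, warp, hex]
    linarith [mul_le_mul_of_nonneg_left (hxN.trans hNM)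
      (spike_nonneg h.rho_mem.1.le h.rho_mem.2 ζ)]
  refine (lt_area_sub_of_le_spike h.c_mem.1.le h.c_mem.2.le h.rho_mem.1 h.rho_mem.2
    (pow_pos h.delta_mem.1 2) rfl h.thin h.notch hspike hx' ?_).not_ge
    (h.area_le_of_overflow_eq_zero hx' hover hθ)
  linarith [h.smoothing, h.l_pos]

end

end IsFine

end TwistedTranslation

/-! ### Collapsing coordinates -/

section PairCollapse

variable {M ε κ δ c ρ l q : ℝ}

theorem isOpen_snd_ne_zero : IsOpen {p : ℂ × ℂ | p.2 ≠ 0} :=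
  isOpen_ne_fun continuous_snd continuous_const

theorem IsFine.embedsWith_warp_sub_warp (h : IsFine M ε κ δ c ρ l) (hq : 0 ≤ q) :
    EmbedsWith splitForm {p | p.2 ≠ 0} (fun p b => area b.1 = area p.1 ∧ ∃ ζ : ℂ,
      area ζ = warp c ρ (excess q l) (fun y => y.1 - excess q l y) ζ (area p.2, area p.1) ∧
      area (ζ - (δ ^ 2 : ℝ)) = warp c ρ (fun y => flatId l y.1 - overflow q l y)
        (fun y => (1 - κ) * overflow q l y) (ζ - (δ ^ 2 : ℝ)) (area b.2, area p.1)) := by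
  obtain ⟨hc, hc1⟩ := h.c_mem
  obtain ⟨hρ, hρ1⟩ := h.rho_mem
  have hover : ∀ y : ℝ × ℝ, y.1 < l → overflow q l y = 0 := fun y hy =>
    overflow_of_le h.l_pos hy.le
  have hwarp := (embedsWith_warp hc hc1.le hρ.le hρ1 (isAreaSplitting_excess h.l_pos hq)).2
  have hunwarp := (embedsWith_warp_of_flat hc hc1.le hρ.le hρ1
    (isAreaSplitting_overflow (q := q) h.l_pos ⟨h.kappa_mem.1.le, h.kappa_mem.2.le⟩) h.l_pos
    (fun y hy => by simp only [hover y hy, flatId_of_le h.l_pos hy.le, sub_zero])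
    (fun y hy => by simp only [hover y hy, mul_zero])).1
  have htranslate := embedsWith_sub_const splitForm univ ((0, (δ ^ 2 : ℝ)) : ℂ × ℂ)
  refine ((hwarp.comp isOpen_snd_ne_zero isOpen_univ htranslate fun _ _ _ _ => trivial).comp
    isOpen_snd_ne_zero isOpen_univ hunwarp fun _ _ _ _ => trivial).mono subset_rfl ?_
  rintro p - b ⟨_, ⟨a, ⟨-, hfst, hζ⟩, rfl⟩, hfst', hθ⟩
  simp only [Prod.fst_sub, Prod.snd_sub, sub_zero] at hfst' hθ
  rw [← hfst] at hζ hθ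
  exact ⟨hfst'.trans hfst.symm, a.2, hζ, hθ⟩

theorem isOpen_setOf_area_add_area_lt (M : ℝ) :
    IsOpen {p : ℂ × ℂ | p.1 ≠ 0 ∧ p.2 ≠ 0 ∧ area p.1 + area p.2 < M} :=
  (isOpen_ne_fun continuous_fst continuous_const).inter (isOpen_snd_ne_zero.inter
    (isOpen_lt ((contDiff_area.continuous.comp continuous_fst).add
      (contDiff_area.continuous.comp continuous_snd)) continuous_const))

theorem embedsWith_trade (M : ℝ) (hε : 0 < ε) (hq : 0 ≤ q) :
    EmbedsWith splitForm {p | p.1 ≠ 0 ∧ p.2 ≠ 0 ∧ area p.1 + area p.2 < M} (fun p b =>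
      area b.1 = area p.1 + area p.2 ∧ area b.2 < area b.1 + 2 * ε ∧
      area p.2 - q - 2 * ε < area b.2 ∧
      (area p.2 < q → area b.1 - q - 2 * ε < area b.2)) := by
  obtain ⟨κ, δ, c, ρ, l, h⟩ := exists_isFine M hε
  have hshear := (embedsWith_shear 1 0).mono
    (V := {p | p.1 ≠ 0 ∧ p.2 ≠ 0 ∧ area p.1 + area p.2 < M})
    (fun p hp => ⟨hp.1, by simpa using add_pos (area_pos hp.1) (area_pos hp.2.1)⟩)
    fun _ _ _ => id
  refine (hshear.comp (isOpen_setOf_area_add_area_lt M) isOpen_snd_ne_zero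
    (h.embedsWith_warp_sub_warp hq)
    fun p hp a ha => ne_zero_of_area_pos (ha.2 ▸ area_pos hp.2.1)).mono subset_rfl ?_
  rintro p ⟨-, -, hpM⟩ b ⟨a, ⟨ha, ha'⟩, hb, ζ, hζ, hθ⟩
  simp only [Int.cast_one, one_mul, add_zero] at ha
  rw [ha', ← hb] at hζ
  rw [← hb] at hθ
  have hN : area b.1 = area p.1 + area p.2 := hb.trans ha
  have hle : area p.2 ≤ area b.1 := hN ▸ le_add_of_nonneg_left (area_nonneg _)
  have hbM : area b.1 ≤ M := hN ▸ hpM.le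
  exact ⟨hN, h.lt_add_of_warp hq (area_nonneg _) hle hbM hζ hθ,
    h.sub_lt_of_warp hq (area_nonneg _) hle hbM (area_nonneg _) hζ hθ,
    h.sub_lt_of_warp_of_lt (area_nonneg _) hle hbM (area_nonneg _) hζ hθ⟩

-- Subtracting the traded second area from the total turns its lower bounds into upper bounds.
theorem embedsWith_collapse_pair (M : ℝ) {p : ℝ} (hε : 0 < ε) (hp : 0 ≤ p) (hq : 0 ≤ q) :
    EmbedsWith splitForm {z | z.1 ≠ 0 ∧ z.2 ≠ 0 ∧ area z.1 + area z.2 < M} (fun z w =>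
      w.1 ≠ 0 ∧ area w.1 < area z.1 + area z.2 + ε ∧
      (area z.1 < p ∨ area z.2 < q → area w.1 < p + q + ε)) := by
  have hopen : IsOpen {b : ℂ × ℂ | b.1 ≠ 0 ∧ area b.2 < area b.1 + 2 * (ε / 4)} :=
    (isOpen_ne_fun continuous_fst continuous_const).inter
      (isOpen_lt (contDiff_area.continuous.comp continuous_snd)
        ((contDiff_area.continuous.comp continuous_fst).add continuous_const))
  have hshear := (embedsWith_shear (-1) (2 * (ε / 4))).mono
    (V := {b | b.1 ≠ 0 ∧ area b.2 < area b.1 + 2 * (ε / 4)})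
    (fun b hb => ⟨hb.1, by push_cast; linarith [hb.2]⟩) fun b hb w hw =>
      (⟨by push_cast at hw; linarith [hw.1], by push_cast at hw; linarith [hw.1, hb.2]⟩ :
        area w.1 = area b.1 - area b.2 + ε / 2 ∧ 0 < area w.1)
  refine ((embedsWith_trade M (by positivity) hq).comp (isOpen_setOf_area_add_area_lt M) hopen
    hshear fun z hz b hb => ⟨ne_zero_of_area_pos ?_, hb.2.1⟩).mono subset_rfl ?_
  · exact hb.1 ▸ add_pos (area_pos hz.1) (area_pos hz.2.1)
  · rintro z - w ⟨b, ⟨hN, -, hlow, hlow'⟩, hw, hwpos⟩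
    refine ⟨ne_zero_of_area_pos hwpos, by linarith [area_nonneg b.2], ?_⟩
    rintro (hz | hz)
    · linarith
    · linarith [hlow' hz]

end PairCollapse

section Collapse

variable {n : ℕ} {p : Fin n → ℝ} {ε : ℝ}

theorem isOpen_puncturedPolydisc (n : ℕ) (M : ℝ) :
    IsOpen {z : Fin n → ℂ | ∀ i, z i ≠ 0 ∧ area (z i) < M} := by
  simp only [Set.ofPred_forall]
  exact isOpen_iInter_of_finite fun i => (isOpen_ne_fun (continuous_apply i) continuous_const).inter
    (isOpen_lt (contDiff_area.continuous.comp (continuous_apply i)) continuous_const)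

theorem embedsWith_collapse_insert (hp : ∀ i, 0 ≤ p i) (M : ℝ) (i : Fin n) {S : Finset (Fin n)}
    (hi : i ∉ S) (hε : 0 < ε) :
    EmbedsWith (stdSymplecticForm n) {z | ∀ j, z j ≠ 0 ∧ area (z j) < M} (fun z w =>
      (w i ≠ 0 ∧ ∀ j, j ≠ i → j ∉ S → w j = z j) ∧
      area (w i) < ∑ j ∈ insert i S, area (z j) + ε ∧
      ((∃ j ∈ insert i S, area (z j) < p j) → area (w i) < ∑ j ∈ insert i S, p j + ε)) := by
  induction S using Finset.induction_on generalizing ε with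
  | empty =>
    refine (EmbedsWith.refl _ _).mono subset_rfl ?_
    rintro z hz _ rfl
    simp only [insert_empty_eq, Finset.sum_singleton, Finset.mem_singleton, exists_eq_left]
    exact ⟨⟨(hz i).1, fun _ _ _ => trivial⟩, by linarith, fun h => by linarith⟩
  | insert a S ha ih =>
    obtain ⟨hia, hiS⟩ : i ≠ a ∧ i ∉ S := by simpa using hi
    have haS : a ∉ insert i S := by simp [hia.symm, ha]
    rw [Finset.insert_comm i a S]
    have hstep := (embedsWith_collapse_pair (∑ _j ∈ insert i S, M + ε / 2 + M) (half_pos hε)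
      (p := ∑ j ∈ insert i S, p j + ε / 2)
      (add_nonneg (Finset.sum_nonneg fun j _ => hp j) (half_pos hε).le) (hp a)).onPair hia
      (isOpen_setOf_area_add_area_lt _)
    refine ((ih hiS (half_pos hε)).comp (isOpen_puncturedPolydisc n M)
      ((isOpen_setOf_area_add_area_lt _).preimage (by fun_prop)) hstep ?_).mono subset_rfl ?_
    · rintro z hz y ⟨⟨hy, hrest⟩, harea, -⟩
      have hya := hrest a hia.symm ha
      have hsum : ∑ j ∈ insert i S, area (z j) ≤ ∑ _j ∈ insert i S, M :=
        Finset.sum_le_sum fun j _ => (hz j).2.le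
      refine ⟨hy, ?_⟩
      simp only [hya]
      exact ⟨(hz a).1, by linarith [(hz a).2]⟩
    · rintro z - w ⟨y, ⟨⟨-, hrest⟩, harea, hcollapse⟩, ⟨hw, hsum, hpair⟩, hrest'⟩
      rw [hrest a hia.symm ha] at hsum hpair
      simp only [Finset.sum_insert haS, Finset.exists_mem_insert a (insert i S)]
      refine ⟨⟨hw, fun j hji hja => ?_⟩, by linarith, fun h => ?_⟩
      · rw [Finset.mem_insert, not_or] at hja
        rw [hrest' j hji hja.1, hrest j hji hja.2]
      · linarith [hpair (h.symm.imp hcollapse id)]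

theorem embedsWith_collapse (hp : ∀ i, 0 ≤ p i) (M : ℝ) (i : Fin n) (hε : 0 < ε) :
    EmbedsWith (stdSymplecticForm n) {z | ∀ j, z j ≠ 0 ∧ area (z j) < M}
      (fun z w => (∃ j, area (z j) < p j) → area (w i) < ∑ j, p j + ε) := by
  refine (embedsWith_collapse_insert hp M i (Finset.notMem_erase i Finset.univ) hε).mono
    subset_rfl fun z _ w hw => ?_
  simpa only [Finset.insert_erase (Finset.mem_univ i), Finset.mem_univ, true_and] using hw.2.2

end Collapse

/-! ### Embedding the disc into the punctured disc -/

section Puncture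

variable {M ε κ δ c ρ l : ℝ}

theorem isOpen_setOf_area_snd_lt (M : ℝ) : IsOpen {p : ℂ × ℂ | area p.2 < M} :=
  isOpen_lt (contDiff_area.continuous.comp continuous_snd) continuous_const

theorem cardioid_neg_ofReal {d : ℝ} (hd : 0 < d) (c : ℝ) : cardioid c (-d) = c := by
  have hre := norm_mul_phase_re (-(d : ℂ))
  rw [norm_neg, Complex.norm_real, Real.norm_of_nonneg hd.le, Complex.neg_re,
    Complex.ofReal_re] at hre
  have hphase : (phase (-(d : ℂ))).re = -1 :=
    mul_left_cancel₀ hd.ne' (hre.trans (mul_neg_one d).symm)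
  rw [cardioid, hphase]
  ring

theorem IsFine.ne_zero_of_area_sub_le (h : IsFine M ε κ δ c ρ l) {x : ℝ} {ζ : ℂ} (hx : 0 ≤ x)
    (hxM : x ≤ M)
    (hζ : area (ζ - (δ ^ 2 : ℝ)) ≤ 2 * l + cardioid c (ζ - (δ ^ 2 : ℝ)) * x) : ζ ≠ 0 := by
  rintro rfl
  have harea : area (-(δ ^ 2 : ℝ)) = Real.pi * (δ ^ 2) ^ 2 := by
    rw [area_eq_norm, norm_neg, Complex.norm_real, Real.norm_of_nonneg (sq_nonneg δ)]
  rw [zero_sub, cardioid_neg_ofReal (pow_pos h.delta_mem.1 2), harea] at hζ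
  have := mul_le_mul_of_nonneg_left hxM h.c_mem.1.le
  have : 0 ≤ Real.pi * (δ ^ 2) ^ 2 := mul_nonneg Real.pi_pos.le (sq_nonneg _)
  linarith [h.hole (hx.trans hxM)]

theorem IsFine.area_le_of_warp_flatId (h : IsFine M ε κ δ c ρ l) {y : ℝ × ℝ} (hy : 0 ≤ y.1)
    {η : ℂ} (hη : area η = warp c ρ (fun y => flatId l y.1) (fun _ => 0) η y) :
    area η ≤ 2 * l + cardioid c η * y.1 := by
  have := mul_le_mul_of_nonneg_left (flatId_le h.l_pos hy)
    (cardioid_nonneg h.c_mem.1.le h.c_mem.2.le η)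
  rw [hη, warp]
  linarith [sub_two_mul_le_flatId h.l_pos y.1]

theorem IsFine.embedsWith_puncture_snd (h : IsFine (M + ε) ε κ δ c ρ l) (hε : 0 < ε) :
    EmbedsWith splitForm {p | area p.2 < M}
      (fun p b => area b.1 = area p.1 ∧ 0 < area b.2 ∧ area b.2 < area p.2 + ε) := by
  obtain ⟨hc, hc1⟩ := h.c_mem
  have hM := isOpen_setOf_area_snd_lt M
  have hwarp := (embedsWith_warp_of_flat hc hc1.le h.rho_mem.1.le h.rho_mem.2
    (isAreaSplitting_flatId h.l_pos) h.l_pos (fun y hy => flatId_of_le h.l_pos hy.le)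
    fun _ _ => rfl).2.mono (subset_univ {p | area p.2 < M}) fun p _ a ha =>
      (⟨ha.1, h.area_le_of_warp_flatId (area_nonneg _) ha.2⟩ :
        area p.1 = area a.1 ∧ area a.2 ≤ 2 * l + cardioid c a.2 * area p.2)
  have htranslate := embedsWith_sub_const splitForm univ ((0, (-(δ ^ 2) : ℝ)) : ℂ × ℂ)
  have hunwarp := (embedsWith_warp hc hc1.le h.rho_mem.1.le h.rho_mem.2 isAreaSplitting_fst).1
  have hsub : ∀ η : ℂ, η - (-(δ ^ 2) : ℝ) - (δ ^ 2 : ℝ) = η := fun η => by push_cast; ring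
  refine ((hwarp.comp hM isOpen_univ htranslate fun _ _ _ _ => trivial).comp hM isOpen_snd_ne_zero
    hunwarp ?_).mono subset_rfl ?_
  · rintro p hp _ ⟨a, ⟨-, ha⟩, rfl⟩
    exact h.ne_zero_of_area_sub_le (area_nonneg p.2) (by linarith [hp.out])
      (by rwa [Prod.snd_sub, hsub])
  · rintro p hp b ⟨_, ⟨a, ⟨hfst, ha⟩, rfl⟩, hb, hfst', hζ⟩
    simp only [Prod.fst_sub, Prod.snd_sub, sub_zero, warp, sub_self, zero_add, mul_zero,
      add_zero] at hfst' hζ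
    refine ⟨hfst'.trans hfst.symm, area_pos hb, ?_⟩
    have hM : area p.2 + ε ≤ M + ε := by linarith [hp.out]
    have hle := mul_le_mul_of_nonneg_left (min_le_left (area b.2) (area p.2 + ε))
      (cardioid_nonneg hc.le hc1.le (a.2 - (-(δ ^ 2) : ℝ)))
    have := h.lt_add_of_cardioid_bounds (by linarith [area_nonneg p.2]) (area_nonneg p.2)
      ((min_le_right _ _).trans hM) (by rwa [hsub]) (hle.trans hζ.ge)
    exact (min_lt_iff.1 this).resolve_right (lt_irrefl _)

theorem embedsWith_puncture (M : ℝ) (hε : 0 < ε) :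
    EmbedsWith planarForm {η | area η < M} (fun η ζ => 0 < area ζ ∧ area ζ < area η + ε) := by
  obtain ⟨κ, δ, c, ρ, l, h⟩ := exists_isFine (M + ε) hε
  exact ((h.embedsWith_puncture_snd hε).slice (isOpen_setOf_area_snd_lt M) fun η q hq =>
    area_eq_zero.1 (hq.1.trans area_zero)).mono subset_rfl fun _ _ _ hζ => hζ.2

end Puncture

/-! ### Toric domains and capacities -/

section ToricDomains

variable {n : ℕ} {Ω O : Set (Fin n → ℝ)} {U : Set (Fin n → ℂ)} {M ε r R T : ℝ}

theorem toricMoment_apply (z : Fin n → ℂ) (i : Fin n) : toricMoment n z i = area (z i) := rfl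

theorem isOpen_setOf_forall_pos (n : ℕ) : IsOpen {x : Fin n → ℝ | ∀ i, 0 < x i} := by
  simp only [Set.ofPred_forall]
  exact isOpen_iInter_of_finite fun i => isOpen_lt continuous_const (continuous_apply i)

theorem isOpen_toricDomain_intPos (Ω : Set (Fin n → ℝ)) :
    IsOpen (toricDomain n (intPos n Ω)) :=
  (isOpen_interior.inter (isOpen_setOf_forall_pos n)).preimage <|
    continuous_pi fun i => contDiff_area.continuous.comp (continuous_apply i)

theorem isOpen_polydisc (n : ℕ) (M : ℝ) : IsOpen {z : Fin n → ℂ | ∀ i, area (z i) < M} := by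
  simp only [Set.ofPred_forall]
  exact isOpen_iInter_of_finite fun i =>
    isOpen_lt (contDiff_area.continuous.comp (continuous_apply i)) continuous_const

theorem symplecticEmbeds_toricDomain (hU : UniqueDiffOn ℝ U) (hε : 0 < ε)
    (hUM : ∀ z ∈ U, ∀ i, area (z i) < M) (hO : IsOpen O)
    (hOΩ : ∀ x ∈ O, (∀ i, 0 < x i) → x ∈ Ω)
    (hUO : ∀ z ∈ U, ∀ x : Fin n → ℝ, (∀ i, x i < area (z i) + ε) → x ∈ O) :
    SymplecticEmbeds n U (toricDomain n (intPos n Ω)) := by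
  refine ((embedsWith_puncture M hε).pi ?_ n).symplecticEmbeds (isOpen_polydisc n M) hUM hU
    fun z hz w hw => ?_
  · exact isOpen_lt contDiff_area.continuous continuous_const
  · have hpos : ∀ i, 0 < toricMoment n w i := fun i => (hw i).1
    exact ⟨interior_maximal (fun x hx => hOΩ x hx.1 hx.2) (hO.inter (isOpen_setOf_forall_pos n))
      ⟨hUO z hz _ fun i => (hw i).2, hpos⟩, hpos⟩

theorem sum_area_lt_of_mem_euclideanBall {z : Fin n → ℂ} (hz : z ∈ euclideanBall n r) :
    ∑ i, area (z i) < Real.pi * r ^ 2 := by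
  simp only [area, ← Finset.mul_sum]
  exact mul_lt_mul_of_pos_left hz Real.pi_pos

theorem symplecticEmbeds_euclideanBall (hrT : Real.pi * r ^ 2 < T)
    (hΩ : ∀ x : Fin n → ℝ, (∀ i, 0 ≤ x i) → ∑ i, x i ≤ T → x ∈ Ω) :
    SymplecticEmbeds n (euclideanBall n r) (toricDomain n (intPos n Ω)) := by
  set ε := (T - Real.pi * r ^ 2) / (n + 1)
  have hn : (n + 1) * ε = T - Real.pi * r ^ 2 := mul_div_cancel₀ _ (by positivity)
  have hε0 : 0 < ε := div_pos (sub_pos.2 hrT) (by positivity)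
  refine symplecticEmbeds_toricDomain (M := T) (ε := ε) (O := {x | ∑ i, x i < T}) ?_ hε0
    (fun z hz i => ?_) ?_ (fun x hx hx0 => hΩ x (fun i => (hx0 i).le) hx.out.le)
    fun z hz x hx => ?_
  · exact (isOpen_lt (by fun_prop) continuous_const).uniqueDiffOn
  · exact (Finset.single_le_sum (f := fun i => area (z i)) (fun j _ => area_nonneg _)
      (Finset.mem_univ i)).trans_lt ((sum_area_lt_of_mem_euclideanBall hz).trans hrT)
  · exact isOpen_lt (by fun_prop) continuous_const
  · calc ∑ i, x i ≤ ∑ i, (area (z i) + ε) := Finset.sum_le_sum fun i _ => (hx i).le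
      _ = ∑ i, area (z i) + n * ε := by simp [Finset.sum_add_distrib]
      _ < T := by linarith [sum_area_lt_of_mem_euclideanBall hz]

theorem cubeP_eq_closedBall (hr : 0 < r) : cubeP n r = Metric.closedBall 0 r := by
  ext z
  have hle : ∀ i, area (z i) ≤ Real.pi * r ^ 2 ↔ ‖z i‖ ≤ r := fun i => by
    rw [area_eq_norm, mul_le_mul_iff_right₀ Real.pi_pos, sq_le_sq₀ (norm_nonneg _) hr.le]
  rw [mem_closedBall_zero_iff, pi_norm_le_iff_of_nonneg hr.le]
  exact ⟨fun hz i => (hle i).1 (hz.2 i), fun hz => ⟨fun i => area_nonneg _, fun i =>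
    (hle i).2 (hz i)⟩⟩

theorem symplecticEmbeds_cubeP (hr : 0 < r) (hrT : Real.pi * r ^ 2 < T)
    (hΩ : ∀ x : Fin n → ℝ, (∀ i, 0 ≤ x i) → (∀ i, x i ≤ T) → x ∈ Ω) :
    SymplecticEmbeds n (cubeP n r) (toricDomain n (intPos n Ω)) := by
  refine symplecticEmbeds_toricDomain (M := T) (O := {x | ∀ i, x i < T}) ?_ (sub_pos.2 hrT)
    (fun z hz i => (hz.2 i).trans_lt hrT) ?_
    (fun x hx hx0 => hΩ x (fun i => (hx0 i).le) fun i => (hx i).le) fun z hz x hx i => ?_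
  · rw [cubeP_eq_closedBall hr]
    exact uniqueDiffOn_convex (convex_closedBall _ _)
      ⟨0, Metric.ball_subset_interior_closedBall (Metric.mem_ball_self hr)⟩
  · simp only [Set.ofPred_forall]
    exact isOpen_iInter_of_finite fun i => isOpen_lt (continuous_apply i) continuous_const
  · have := hz.2 i
    rw [toricMoment_apply] at this
    linarith [hx i]

/-- Downward closedness of a subset of the orthant `ℝⁿ_{≥0}`. -/
def IsDownwardClosed (Ω : Set (Fin n → ℝ)) : Prop :=
  ∀ p ∈ Ω, ∀ q : Fin n → ℝ, (∀ i, 0 ≤ q i) → (∀ i, q i ≤ p i) → q ∈ Ω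

theorem IsDownwardClosed.exists_lt (hΩ : IsDownwardClosed Ω) {p x : Fin n → ℝ}
    (hp : ∀ i, 0 ≤ p i) (hpΩ : p ∉ Ω) (hx : x ∈ Ω) : ∃ i, x i < p i := by
  by_contra! hpx
  exact hpΩ (hΩ x hx p hp hpx)

theorem IsDownwardClosed.symplecticEmbeds_sympCylinder [NeZero n] (hΩ : IsDownwardClosed Ω)
    (hbdd : Bornology.IsBounded Ω) {p : Fin n → ℝ} (hp : ∀ i, 0 ≤ p i) (hpΩ : p ∉ Ω)
    (hpR : ∑ i, p i < Real.pi * R ^ 2) :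
    SymplecticEmbeds n (toricDomain n (intPos n Ω)) (sympCylinder n R) := by
  obtain ⟨M, hM⟩ := hbdd.exists_norm_le
  refine (embedsWith_collapse hp (M + 1) 0 (sub_pos.2 hpR)).symplecticEmbeds
    (isOpen_puncturedPolydisc n (M + 1)) (fun z hz i => ⟨ne_zero_of_area_pos (hz.2 i), ?_⟩)
    (isOpen_toricDomain_intPos Ω).uniqueDiffOn fun z hz w hw => ?_
  · have := (le_abs_self _).trans ((norm_le_pi_norm _ i).trans (hM _ (interior_subset hz.1)))
    rw [toricMoment_apply] at this
    linarith
  · have := hw (hΩ.exists_lt hp hpΩ (interior_subset hz.1))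
    rw [add_sub_cancel] at this
    exact lt_of_mul_lt_mul_left this Real.pi_pos.le

theorem IsDownwardClosed.symplecticEmbeds_cubeN (hΩ : IsDownwardClosed Ω) (hT : 0 ≤ T)
    (hTΩ : (fun _ => T) ∉ Ω) (hTR : T ≤ Real.pi * R ^ 2) :
    SymplecticEmbeds n (toricDomain n (intPos n Ω)) (cubeN n R) := by
  have hopen := isOpen_toricDomain_intPos Ω
  refine (EmbedsWith.refl _ _).symplecticEmbeds hopen subset_rfl hopen.uniqueDiffOn ?_
  rintro z hz _ rfl
  obtain ⟨i, hi⟩ := hΩ.exists_lt (fun _ => hT) hTΩ (interior_subset hz.1)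
  exact ⟨fun i => (hz.2 i).le, i, hi.le.trans hTR⟩

end ToricDomains

section Capacities

variable {n : ℕ} {B Z : ℝ → Set (Fin n → ℂ)} {c c₁ c₂ : Set (Fin n → ℂ) → ℝ≥0∞}
  {X : Set (Fin n → ℂ)} {Ω : Set (Fin n → ℝ)}

/-- Monotonicity under symplectic embeddings, together with the normalization by which the model
domains `B r` and `Z r` both have the capacity of the disk of radius `r`. Conformality is not
imposed. -/
structure IsNormalizedBy (B Z : ℝ → Set (Fin n → ℂ)) (c : Set (Fin n → ℂ) → ℝ≥0∞) : Prop where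
  le_of_symplecticEmbeds : ∀ U V, SymplecticEmbeds n U V → c U ≤ c V
  inner : ∀ r, 0 < r → c (B r) = ENNReal.ofReal (Real.pi * r ^ 2)
  outer : ∀ r, 0 < r → c (Z r) = ENNReal.ofReal (Real.pi * r ^ 2)

theorem IsNormalizedCapacity.isNormalizedBy [NeZero n] (hc : IsNormalizedCapacity n c) :
    IsNormalizedBy (euclideanBall n) (sympCylinder n) c :=
  ⟨hc.1, fun r hr => (hc.2.2 r hr).1, fun r hr => (hc.2.2 r hr).2⟩

theorem IsCubeNormalizedCapacity.isNormalizedBy (hc : IsCubeNormalizedCapacity n c) :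
    IsNormalizedBy (cubeP n) (cubeN n) c :=
  ⟨hc.1, fun r hr => (hc.2.2 r hr).1, fun r hr => (hc.2.2 r hr).2⟩

theorem exists_radius_of_lt {a b : ℝ≥0∞} (hab : a < b) :
    ∃ r, 0 < r ∧ a < ENNReal.ofReal (Real.pi * r ^ 2) ∧
      ENNReal.ofReal (Real.pi * r ^ 2) < b := by
  obtain ⟨s, has, hsb⟩ := ENNReal.lt_iff_exists_nnreal_btwn.1 hab
  have hs : (0 : ℝ) < s := by exact_mod_cast zero_le.trans_lt has
  have hr : Real.pi * √(s / Real.pi) ^ 2 = s := by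
    rw [Real.sq_sqrt (by positivity), mul_div_cancel₀ _ Real.pi_ne_zero]
  refine ⟨√(s / Real.pi), Real.sqrt_pos.2 (by positivity), ?_⟩
  rw [hr, ENNReal.ofReal_coe_nnreal]
  exact ⟨has, hsb⟩

theorem IsNormalizedBy.le (h₁ : IsNormalizedBy B Z c₁) (h₂ : IsNormalizedBy B Z c₂)
    (hX : ∀ r R, 0 < r → Real.pi * r ^ 2 < Real.pi * R ^ 2 →
      SymplecticEmbeds n (B r) X ∨ SymplecticEmbeds n X (Z R)) : c₁ X ≤ c₂ X := by
  by_contra! hlt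
  obtain ⟨r, hr, hr₂, hr₁⟩ := exists_radius_of_lt hlt
  obtain ⟨R, hR, hrR, hR₁⟩ := exists_radius_of_lt hr₁
  rcases hX r R hr (ENNReal.ofReal_lt_ofReal_iff'.1 hrR).1 with hB | hZ
  · exact hr₂.not_ge (h₂.inner r hr ▸ h₂.le_of_symplecticEmbeds _ _ hB)
  · exact hR₁.not_ge (h₁.outer R hR ▸ h₁.le_of_symplecticEmbeds _ _ hZ)

theorem IsDownwardClosed.euclideanBall_or_sympCylinder [NeZero n] (hΩ : IsDownwardClosed Ω)
    (hbdd : Bornology.IsBounded Ω) {r R : ℝ} (hrR : Real.pi * r ^ 2 < Real.pi * R ^ 2) :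
    SymplecticEmbeds n (euclideanBall n r) (toricDomain n (intPos n Ω)) ∨
      SymplecticEmbeds n (toricDomain n (intPos n Ω)) (sympCylinder n R) := by
  obtain ⟨T, hrT, hTR⟩ := exists_between hrR
  refine or_iff_not_imp_right.2 fun hZ => symplecticEmbeds_euclideanBall hrT fun p hp hpT => ?_
  by_contra hpΩ
  exact hZ (hΩ.symplecticEmbeds_sympCylinder hbdd hp hpΩ (hpT.trans_lt hTR))

theorem IsDownwardClosed.cubeP_or_cubeN (hΩ : IsDownwardClosed Ω) {r R : ℝ} (hr : 0 < r)
    (hrR : Real.pi * r ^ 2 < Real.pi * R ^ 2) :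
    SymplecticEmbeds n (cubeP n r) (toricDomain n (intPos n Ω)) ∨
      SymplecticEmbeds n (toricDomain n (intPos n Ω)) (cubeN n R) := by
  by_cases hRΩ : (fun _ => Real.pi * R ^ 2) ∈ Ω
  · exact .inl (symplecticEmbeds_cubeP hr hrR fun x hx hxR => hΩ _ hRΩ x hx hxR)
  · exact .inr (hΩ.symplecticEmbeds_cubeN (by positivity) hRΩ le_rfl)

end Capacities

theorem normalized_capacities_agree_on_monotone_general (n : ℕ) [NeZero n]
    (Ω : Set (Fin n → ℝ)) (hbdd : Bornology.IsBounded Ω) (hΩ : IsDownwardClosed Ω) :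
    (∀ c₁ c₂ : Set (Fin n → ℂ) → ℝ≥0∞,
      IsNormalizedBy (euclideanBall n) (sympCylinder n) c₁ →
      IsNormalizedBy (euclideanBall n) (sympCylinder n) c₂ →
      c₁ (toricDomain n (intPos n Ω)) = c₂ (toricDomain n (intPos n Ω))) ∧
    (∀ c₁ c₂ : Set (Fin n → ℂ) → ℝ≥0∞,
      IsNormalizedBy (cubeP n) (cubeN n) c₁ → IsNormalizedBy (cubeP n) (cubeN n) c₂ →
      c₁ (toricDomain n (intPos n Ω)) = c₂ (toricDomain n (intPos n Ω))) := by
  have hball := fun r R (_ : 0 < r) => hΩ.euclideanBall_or_sympCylinder hbdd (r := r) (R := R)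
  have hcube := fun r R (hr : 0 < r) => hΩ.cubeP_or_cubeN hr (R := R)
  exact ⟨fun c₁ c₂ h₁ h₂ => (h₁.le h₂ hball).antisymm (h₂.le h₁ hball),
    fun c₁ c₂ h₁ h₂ => (h₁.le h₂ hcube).antisymm (h₂.le h₁ hcube)⟩

/-- For a monotone domain `Ω ⊂ ℝⁿ_{≥0}`, all ball-normalized capacities coincide on
`X_{int(Ω)}`, and likewise all cube-normalized capacities coincide on `X_{int(Ω)}`. -/
theorem normalized_capacities_agree_on_monotone
    (n : ℕ) [NeZero n] (Ω : Set (Fin n → ℝ)) (hΩ : IsMonotoneDomain n Ω) :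
    (∀ c₁ c₂ : Set (Fin n → ℂ) → ℝ≥0∞,
      IsNormalizedCapacity n c₁ → IsNormalizedCapacity n c₂ →
      c₁ (toricDomain n (intPos n Ω)) = c₂ (toricDomain n (intPos n Ω))) ∧
    (∀ c₁ c₂ : Set (Fin n → ℂ) → ℝ≥0∞,
      IsCubeNormalizedCapacity n c₁ → IsCubeNormalizedCapacity n c₂ →
      c₁ (toricDomain n (intPos n Ω)) = c₂ (toricDomain n (intPos n Ω))) :=
  (normalized_capacities_agree_on_monotone_general n Ω hΩ.1.isBounded hΩ.2.2.2).imp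
    (fun h c₁ c₂ h₁ h₂ => h c₁ c₂ h₁.isNormalizedBy h₂.isNormalizedBy)
    fun h c₁ c₂ h₁ h₂ => h c₁ c₂ h₁.isNormalizedBy h₂.isNormalizedBy
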